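/- Let (E,†) be a finite-dimensional semisimple ℚ-algebra with involution and R ⊂ E a †-stable order. Let d = dim_ℚ E and, for x ∈ E, set N(x) = |det(L_x)| where L_x : E → E is left multiplication by x. Then there exists a real constant c > 0, depending only on (R,†), such that: for every q ∈ R, if there exists a ∈ E, invertible in E, with a†·q·a ∈ ℚ^×, then there exists b ∈ R such that b†·q·b ∈ ℤ \ {0} and N(b)² ≤ c·N(q)^{2d−1}. (This is the regular-representation instance of the paper's main arithmetic proposition, in which N = |det ∘ L| is a †-compatible norm of rank d on E; the bound N(b)² ≤ c·N(q)^{2d−1} expresses N(b) ≤ c·N(q)^{d−1/2}.) -/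

import Mathlib

/-!
Let `t` be the trace of the regular representation of `E`, a nondegenerate form since `E` is
semisimple, and suppose that `a† q a = m ∈ ℚ^×`.

*A lattice.* Put `N = det(L_q)`. Up to squares `m = m₁ m₂` with `m₁ ∣ N` and `m₂` prime to `N`, so
after rescaling `a⁻¹` to `α` one has `q = m₁ ψ` with `ψ = m₂ α† α`. The form `t(x† ψ y)` is nearly
unimodular on `R` at the primes not dividing `N`, and on `α⁻¹ R` at the primes not dividing `m₂`.
Gluing these gives a right `R`-lattice `L ⊂ E` on which the form is integral, with discriminant
bounded in terms of `R` only, and `(c N / m₁) L ⊂ R` for a constant `c` (`exists_config`).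

*Reduction theory.* Over `ℝ`, left multiplication by `√|m₂| α` turns `L` into a lattice in `E ⊗ ℝ` on
which `t(x† y)` is integral with bounded discriminant, stable under right multiplication by `R`.
The unitary group `t† t = 1` of `E ⊗ ℝ` acts on such lattices. If such a lattice has very short
vectors, then those span an isotropic right ideal (integral forms vanish on short vectors), and a
unitary element expanding this ideal by the factor `3` increases the minimum. Hence the orbit of
the lattice contains one whose minimum is bounded below, and by Minkowski's theorem that one has a
bounded system of independent vectors (`TraceAlg.exists_bounded_tuple`). Because the form is
invariant, `L` itself contains a `ℚ`-basis `eᵢ` of `E` with all the integers `t(eᵢ† ψ eⱼ ωₖ)` bounded,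
where `ω` is a basis of `R`.

*Finiteness.* So the matrix `(eᵢ† ψ eⱼ)` takes finitely many values for all `q` together, and each one
represents a nonzero rational at some integer vector, because `ψ` represents a rational number at
`α⁻¹`. This yields `x ∈ L` with `x† ψ x = ν ∈ ℚ^×` and `|ν|` bounded (`exists_int_value`).

*The bound.* Put `b = (c N / m₁) x ∈ R`. Then `n = b† q b = c² (N / m₁) N ν` lies in `ℚ ∩ R = ℤ`, and
`|n| ≤ c² |ν| N²`. As the norm is multiplicative and `†`-invariant, `N(b)² N(q) = |n|^d`, whence
`N(b)² ≤ (c² |ν|)^d N(q)^(2d - 1)`.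
-/

/-- The norm `N(x) = |det(L_x)|` of left multiplication by `x` on the finite-dimensional
`ℚ`-algebra `E`. -/
noncomputable def regNorm (E : Type*) [Ring E] [Algebra ℚ E] (x : E) : ℚ :=
  |LinearMap.det (LinearMap.mulLeft ℚ x)|

/-- `dag` is an involution of the `ℚ`-algebra `E`. -/
def IsInvolutionQ (E : Type*) [Ring E] [Algebra ℚ E] (dag : E → E) : Prop :=
  (∀ x y : E, dag (x + y) = dag x + dag y) ∧
  (∀ x y : E, dag (x * y) = dag y * dag x) ∧
  (∀ x : E, dag (dag x) = x) ∧
  (∀ r : ℚ, dag (algebraMap ℚ E r) = algebraMap ℚ E r)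

/-! ### Minkowski's theorem and bounded independent vectors -/

open MeasureTheory in
/-- A lattice of covolume at most `D` has a nonzero vector of length at most `T` which is either
off the hyperplane `n⊥` or shorter than `δ`. This is Minkowski's theorem for the ellipsoid with
semi-axis `δ κ` along `n` and `δ` orthogonally to `n`, where `κ` is a large constant. -/
theorem exists_short_off_hyperplane {d : ℕ} (D δ : ℝ) (hδ : 0 < δ) :
    ∃ T : ℝ, 0 < T ∧ ∀ β : Module.Basis (Fin d) ℝ (EuclideanSpace ℝ (Fin d)),
      |(EuclideanSpace.basisFun (Fin d) ℝ).toBasis.det β| ≤ D →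
      ∀ n : EuclideanSpace ℝ (Fin d), ‖n‖ = 1 →
        ∃ x ∈ Submodule.span ℤ (Set.range β), x ≠ 0 ∧ ‖x‖ ≤ T ∧
          (inner ℝ n x = 0 → ‖x‖ < δ) := by
  set b₀ := (EuclideanSpace.basisFun (Fin d) ℝ).toBasis
  set F₀ : ℝ := volume.real (ZSpan.fundamentalDomain b₀)
  set B₀ : ℝ := volume.real (Metric.ball (0 : EuclideanSpace ℝ (Fin d)) 1)
  have hB₀ : 0 < B₀ := by
    refine ENNReal.toReal_pos (Metric.measure_ball_pos _ _ one_pos).ne' measure_ball_lt_top.ne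
  obtain ⟨κ, hκ⟩ : ∃ κ : ℝ, max D 0 * F₀ * 2 ^ d < δ ^ d * κ * B₀ ∧ 0 < κ := by
    refine ⟨max D 0 * F₀ * 2 ^ d / (δ ^ d * B₀) + 1, ?_, ?_⟩
    · have : 0 < δ ^ d * B₀ := by positivity
      rw [show ∀ x : ℝ, δ ^ d * x * B₀ = x * (δ ^ d * B₀) by intro x; ring, add_mul,
        div_mul_cancel₀ _ this.ne']
      linarith
    · positivity
  refine ⟨δ * (1 + |κ - 1|), by positivity, fun β hβ n hn => ?_⟩
  -- `S` maps the unit ball onto the ellipsoid.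
  set S : EuclideanSpace ℝ (Fin d) →ₗ[ℝ] EuclideanSpace ℝ (Fin d) :=
    δ • LinearMap.transvection (innerₛₗ ℝ n) ((κ - 1) • n) with hS
  have hSx : ∀ y, S y = δ • (y + (inner ℝ n y * (κ - 1)) • n) := by
    intro y; simp [hS, LinearMap.transvection.apply, smul_smul]
  have hdet : LinearMap.det S = δ ^ d * κ := by
    rw [hS, LinearMap.det_smul, LinearMap.transvection.det]
    simp [hn]
  have hconv : Convex ℝ (S '' Metric.ball 0 1) := (convex_ball _ _).linear_image S
  have hsymm : ∀ x ∈ S '' Metric.ball 0 1, -x ∈ S '' Metric.ball 0 1 := by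
    rintro _ ⟨y, hy, rfl⟩
    exact ⟨-y, by simpa using hy, by simp⟩
  have hvol : volume (ZSpan.fundamentalDomain β) * 2 ^ Module.finrank ℝ (EuclideanSpace ℝ (Fin d))
      < volume (S '' Metric.ball 0 1) := by
    have hF : volume (ZSpan.fundamentalDomain β) ≠ ⊤ :=
      (ZSpan.fundamentalDomain_isBounded β).measure_lt_top.ne
    rw [Measure.addHaar_image_linearMap, hdet]
    have h1 : volume (ZSpan.fundamentalDomain β) * 2 ^ Module.finrank ℝ (EuclideanSpace ℝ (Fin d))
      ≠ ⊤ := ENNReal.mul_ne_top hF (by simp)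
    have h2 : ENNReal.ofReal |δ ^ d * κ| * volume (Metric.ball (0 : EuclideanSpace ℝ (Fin d)) 1)
      ≠ ⊤ := ENNReal.mul_ne_top ENNReal.ofReal_ne_top measure_ball_lt_top.ne
    rw [← ENNReal.toReal_lt_toReal h1 h2, ENNReal.toReal_mul, ENNReal.toReal_mul]
    have h3 := ZSpan.measureReal_fundamentalDomain β volume b₀
    simp only [measureReal_def] at h3
    have hpos : 0 < δ ^ d * κ := mul_pos (pow_pos hδ _) hκ.2
    rw [h3, abs_of_pos hpos, ENNReal.toReal_ofReal hpos.le]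
    simp only [finrank_euclideanSpace, Fintype.card_fin, ENNReal.toReal_pow, ENNReal.toReal_ofNat]
    refine lt_of_le_of_lt ?_ hκ.1
    gcongr
    · exact hβ.trans (le_max_left _ _)
    · rfl
  have : Countable (Submodule.span ℤ (Set.range β)).toAddSubgroup :=
    inferInstanceAs (Countable (Submodule.span ℤ (Set.range β)))
  obtain ⟨x, hx0, y, hy, hyx⟩ := exists_ne_zero_mem_lattice_of_measure_mul_two_pow_lt_measure
    (ZSpan.isAddFundamentalDomain' β volume) hsymm hconv hvol
  have hy1 : ‖y‖ < 1 := by simpa using hy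
  refine ⟨x, x.2, by simpa using hx0, ?_, ?_⟩
  · rw [← hyx, hSx, norm_smul, Real.norm_of_nonneg hδ.le]
    gcongr
    refine (norm_add_le _ _).trans ?_
    rw [norm_smul, norm_mul, hn, mul_one, Real.norm_eq_abs (κ - 1)]
    have : ‖inner ℝ n y‖ ≤ 1 := (norm_inner_le_norm n y).trans (by rw [hn]; linarith)
    have := mul_le_mul_of_nonneg_right this (norm_nonneg (κ - 1))
    rw [one_mul, Real.norm_eq_abs (κ - 1)] at this
    linarith
  · intro h
    rw [← hyx, hSx, inner_smul_right, inner_add_right, inner_smul_right, real_inner_self_eq_norm_sq,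
      hn] at h
    have h' : inner ℝ n y = 0 := by
      have h4 : inner ℝ n y * κ = 0 := by
        have := (mul_eq_zero.1 h).resolve_left hδ.ne'
        linarith
      exact (mul_eq_zero.1 h4).resolve_right hκ.2.ne'
    rw [← hyx, hSx, h', zero_mul, zero_smul, add_zero, norm_smul, Real.norm_of_nonneg hδ.le]
    nlinarith

/-- A lattice of covolume at most `D` without nonzero vectors shorter than `δ` contains `d`
linearly independent vectors of length at most `T = T(d, D, δ)`. -/
theorem exists_bounded_independent {d : ℕ} (D δ : ℝ) (hδ : 0 < δ) :
    ∃ T : ℝ, ∀ β : Module.Basis (Fin d) ℝ (EuclideanSpace ℝ (Fin d)),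
      |(EuclideanSpace.basisFun (Fin d) ℝ).toBasis.det β| ≤ D →
      (∀ x ∈ Submodule.span ℤ (Set.range β), x ≠ 0 → δ ≤ ‖x‖) →
      ∃ e : Fin d → EuclideanSpace ℝ (Fin d), LinearIndependent ℝ e ∧
        ∀ i, e i ∈ Submodule.span ℤ (Set.range β) ∧ ‖e i‖ ≤ T := by
  obtain ⟨T, hT, h⟩ := exists_short_off_hyperplane (d := d) D δ hδ
  refine ⟨T, fun β hβ hmin => ?_⟩
  suffices H : ∀ r ≤ d, ∃ e : Fin r → EuclideanSpace ℝ (Fin d), LinearIndependent ℝ e ∧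
        ∀ i, e i ∈ Submodule.span ℤ (Set.range β) ∧ ‖e i‖ ≤ T from H d le_rfl
  intro r
  induction r with
  | zero => exact fun _ => ⟨Fin.elim0, linearIndependent_empty_type, fun i => i.elim0⟩
  | succ r ih =>
    intro hr
    obtain ⟨e, he, heB⟩ := ih (by omega)
    -- A short vector is added off the span of the vectors already found.
    have hW : (Submodule.span ℝ (Set.range e))ᗮ ≠ ⊥ := by
      intro h0
      rw [Submodule.orthogonal_eq_bot_iff] at h0
      have := finrank_span_eq_card he
      rw [h0, finrank_top] at this
      simp at this
      omega
    obtain ⟨n, hnW, hn0⟩ := Submodule.exists_mem_ne_zero_of_ne_bot hW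
    obtain ⟨x, hx, hx0, hxT, hxn⟩ := h β hβ (‖n‖⁻¹ • n) (norm_smul_inv_norm (𝕜 := ℝ) hn0)
    refine ⟨Fin.cons x e, linearIndependent_finCons.2 ⟨he, fun hxW => ?_⟩, ?_⟩
    · have : inner ℝ (‖n‖⁻¹ • n) x = 0 := by
        rw [inner_smul_left, (Submodule.mem_orthogonal' _ _).1 hnW x hxW, mul_zero]
      exact absurd (hxn this) (not_lt.2 (hmin x hx hx0))
    · intro i
      refine Fin.cases ?_ (fun i => ?_) i
      · simpa using ⟨hx, hxT⟩
      · simpa using heB i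

/-! ### Good lattices in a real algebra with involution -/

/-- The identification of `A` with Euclidean space in which the basis `o` is orthonormal. -/
noncomputable def toEuc {A : Type*} [Ring A] [Algebra ℝ A] {d : ℕ} (o : Module.Basis (Fin d) ℝ A) :
    A ≃ₗ[ℝ] EuclideanSpace ℝ (Fin d) :=
  o.equivFun.trans (WithLp.linearEquiv 2 ℝ (Fin d → ℝ)).symm

/-- A real algebra of dimension `d` with involution `σ` and a nondegenerate trace `τ`, together
with a Casimir element `∑ uᵢ ⊗ vᵢ` (a separability idempotent). The basis `o` fixes a norm on
`A`, and `IsGood` refers to right multiplication by its elements. -/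
structure TraceAlg (A : Type*) [Ring A] [Algebra ℝ A] (d : ℕ) where
  o : Module.Basis (Fin d) ℝ A
  σ : A →ₗ[ℝ] A
  τ : A →ₗ[ℝ] ℝ
  u : Fin d → A
  v : Fin d → A
  σ_mul : ∀ x y, σ (x * y) = σ y * σ x
  σ_σ : ∀ x, σ (σ x) = x
  τ_comm : ∀ x y, τ (x * y) = τ (y * x)
  τ_nondeg : ∀ z, (∀ r, τ (z * r) = 0) → z = 0
  /-- `∑ w uᵢ ⊗ vᵢ = ∑ uᵢ ⊗ vᵢ w`, expressed by applying a linear map to the first factor. -/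
  casimir : ∀ (p : A →ₗ[ℝ] A) (w : A), ∑ i, p (w * u i) * v i = ∑ i, p (u i) * v i * w
  casimir_one : ∑ i, u i * v i = 1

theorem bilin_bound {V F : Type*} [NormedAddCommGroup V] [NormedSpace ℝ V] [FiniteDimensional ℝ V]
    [NormedAddCommGroup F] [NormedSpace ℝ F] [FiniteDimensional ℝ F] (f : V →ₗ[ℝ] V →ₗ[ℝ] F) :
    ∃ K : ℝ, 0 < K ∧ ∀ x y, ‖f x y‖ ≤ K * ‖x‖ * ‖y‖ := by
  let g : V →L[ℝ] V →L[ℝ] F :=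
    LinearMap.toContinuousLinearMap ((LinearMap.toContinuousLinearMap (𝕜 := ℝ) (E := V)
      (F' := F)).toLinearMap ∘ₗ f)
  refine ⟨‖g‖ + 1, by positivity, fun x y => (g.le_opNorm₂ x y).trans ?_⟩
  gcongr
  linarith

namespace TraceAlg

variable {A : Type*} [Ring A] [Algebra ℝ A] {d : ℕ} (S : TraceAlg A d)

/-- The coordinates of an element of `A` in the basis `o`. -/
noncomputable def Φ : A ≃ₗ[ℝ] EuclideanSpace ℝ (Fin d) := toEuc S.o

/-- The bilinear form `(x, y) ↦ τ(x† y)`. -/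
noncomputable def form : LinearMap.BilinForm ℝ A :=
  ((LinearMap.mul ℝ A).compr₂ S.τ).comp S.σ

theorem form_apply (x y : A) : S.form x y = S.τ (S.σ x * y) := rfl

theorem σ_one : S.σ 1 = 1 := by
  have := S.σ_mul 1 (S.σ 1)
  simpa [S.σ_σ] using this.symm

/-- `β` is a basis of a lattice which is stable under right multiplication by the elements of
the basis `o`, on which the form `τ(x† y)` is integral with discriminant at most `C`. -/
structure IsGood (C : ℝ) (β : Module.Basis (Fin d) ℝ A) : Prop where
  mul_mem : ∀ i k, β i * S.o k ∈ Submodule.span ℤ (Set.range β)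
  int : ∀ i j, ∃ n : ℤ, S.form (β i) (β j) = n
  det : |(Matrix.of fun i j => S.form (β i) (β j)).det| ≤ C

include S in
theorem mul_eq_one_of {t : A} (h : S.σ t * t = 1) : t * S.σ t = 1 := by
  have : FiniteDimensional ℝ A := S.o.finiteDimensional_of_finite
  have : IsNoetherianRing A := IsNoetherianRing.of_finite ℝ A
  exact mul_eq_one_symm h

theorem exists_mul_bound : ∃ K : ℝ, 0 < K ∧ ∀ x y, ‖S.Φ (x * y)‖ ≤ K * ‖S.Φ x‖ * ‖S.Φ y‖ := by
  obtain ⟨K, hK, h⟩ := bilin_bound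
    (((LinearMap.mul ℝ A).compl₁₂ S.Φ.symm.toLinearMap S.Φ.symm.toLinearMap).compr₂ S.Φ.toLinearMap)
  exact ⟨K, hK, fun x y => by simpa using h (S.Φ x) (S.Φ y)⟩

theorem exists_form_bound : ∃ K : ℝ, 0 < K ∧ ∀ x y, |S.form x y| ≤ K * ‖S.Φ x‖ * ‖S.Φ y‖ := by
  obtain ⟨K, hK, h⟩ := bilin_bound
    (S.form.compl₁₂ S.Φ.symm.toLinearMap S.Φ.symm.toLinearMap)
  exact ⟨K, hK, fun x y => by simpa using h (S.Φ x) (S.Φ y)⟩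

theorem exists_σ_bound : ∃ K : ℝ, 0 < K ∧ ∀ x, ‖S.Φ (S.σ x)‖ ≤ K * ‖S.Φ x‖ := by
  let g := LinearMap.toContinuousLinearMap (S.Φ.toLinearMap ∘ₗ S.σ ∘ₗ S.Φ.symm.toLinearMap)
  refine ⟨‖g‖ + 1, by positivity, fun x => ?_⟩
  have := g.le_opNorm (S.Φ x)
  simp only [g, LinearMap.coe_toContinuousLinearMap', LinearMap.comp_apply,
    LinearEquiv.coe_coe, LinearEquiv.symm_apply_apply] at this
  refine this.trans ?_
  gcongr
  linarith

/-- Left multiplication by an element `t` of the unitary group `t† t = 1` is an isometry. -/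
theorem form_mul (t x y : A) (h : S.σ t * t = 1) : S.form (t * x) (t * y) = S.form x y := by
  simp only [form_apply, S.σ_mul]
  rw [mul_assoc, ← mul_assoc (S.σ t), h, one_mul]

/-- Left multiplication by an element of the unitary group `t† t = 1`. -/
def mulEquiv {t : A} (h : S.σ t * t = 1) : A ≃ₗ[ℝ] A :=
  LinearEquiv.ofLinearMap (LinearMap.mulLeft ℝ t) (LinearMap.mulLeft ℝ (S.σ t))
    (by ext x; simp [← mul_assoc, S.mul_eq_one_of h]) (by ext x; simp [← mul_assoc, h])

theorem mulEquiv_apply {t : A} (h : S.σ t * t = 1) (x : A) : S.mulEquiv h x = t * x := rfl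

theorem mem_span_map {t : A} (h : S.σ t * t = 1) (β : Module.Basis (Fin d) ℝ A) (y : A) :
    y ∈ Submodule.span ℤ (Set.range (β.map (S.mulEquiv h))) ↔
      ∃ x ∈ Submodule.span ℤ (Set.range β), t * x = y := by
  have : Set.range (β.map (S.mulEquiv h)) =
      (LinearMap.mulLeft ℤ t) '' Set.range β := by
    rw [← Set.range_comp]; rfl
  rw [this, Submodule.span_image, Submodule.mem_map]
  rfl

/-- The unitary group permutes the good lattices. -/
theorem IsGood.map {C : ℝ} {β : Module.Basis (Fin d) ℝ A} (hβ : S.IsGood C β) {t : A}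
    (h : S.σ t * t = 1) : S.IsGood C (β.map (S.mulEquiv h)) where
  mul_mem i k := by
    rw [mem_span_map]
    exact ⟨_, hβ.mul_mem i k, by simp [mulEquiv_apply, mul_assoc]⟩
  int i j := by
    simpa [mulEquiv_apply, S.form_mul _ _ _ h] using hβ.int i j
  det := by
    simpa [mulEquiv_apply, S.form_mul _ _ _ h] using hβ.det

theorem gram_ne_zero : (LinearMap.BilinForm.toMatrix S.o S.form).det ≠ 0 := by
  intro h0
  obtain ⟨c, hc, hc0⟩ := Matrix.exists_mulVec_eq_zero_iff.2 h0
  refine hc ?_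
  have h1 : ∀ x, S.form x (∑ j, c j • S.o j) = 0 := by
    intro x
    rw [← S.o.sum_repr x]
    simp only [map_sum, LinearMap.sum_apply, map_smul, LinearMap.smul_apply]
    have h2 : ∀ i, ∑ j, c j • S.form (S.o i) (S.o j) = 0 := by
      intro i
      have := congrFun hc0 i
      simp only [Matrix.mulVec, dotProduct, LinearMap.BilinForm.toMatrix_apply, Pi.zero_apply] at this
      rw [← this]
      exact Finset.sum_congr rfl fun j _ => by rw [smul_eq_mul, mul_comm]
    simp only [Finset.smul_sum]
    rw [Finset.sum_comm]
    refine Finset.sum_eq_zero fun i _ => ?_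
    have := congrArg (fun z => S.o.repr x i • z) (h2 i)
    simp only [Finset.smul_sum, smul_zero] at this
    rw [← this]
    exact Finset.sum_congr rfl fun j _ => smul_comm _ _ _
  have h2 : ∑ j, c j • S.o j = 0 := by
    refine S.τ_nondeg _ fun r => ?_
    rw [S.τ_comm, ← S.σ_σ r]
    exact h1 (S.σ r)
  have := congrArg S.o.equivFun h2
  funext j
  have h3 := congrFun this j
  simpa [Finsupp.single_apply] using h3

/-- The covolume of a good lattice is bounded, since its square is the discriminant of the form
on the lattice up to a nonzero constant. -/
theorem exists_det_bound (C : ℝ) : ∃ D : ℝ, ∀ β, S.IsGood C β →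
    |(EuclideanSpace.basisFun (Fin d) ℝ).toBasis.det (β.map S.Φ)| ≤ D := by
  set G := (LinearMap.BilinForm.toMatrix S.o S.form).det
  have hG : G ≠ 0 := S.gram_ne_zero
  refine ⟨C / |G| + 1, fun β hβ => ?_⟩
  have h1 : (EuclideanSpace.basisFun (Fin d) ℝ).toBasis = S.o.map S.Φ := by
    ext i : 1
    apply S.Φ.symm.injective
    simp only [Module.Basis.map_apply, LinearEquiv.symm_apply_apply]
    apply S.o.equivFun.injective
    funext j
    simp [Φ, toEuc, Pi.single_apply, eq_comm]
  have h2 : (S.o.map S.Φ).det (β.map S.Φ) = S.o.det β := by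
    rw [Module.Basis.det_map]
    congr 1
    funext i
    simp
  rw [h1, h2]
  have h3 := LinearMap.BilinForm.toMatrix_mul_basis_toMatrix (b := S.o) β S.form
  have h4 := congrArg Matrix.det h3
  rw [Matrix.det_mul, Matrix.det_mul, Matrix.det_transpose, ← Module.Basis.det_apply] at h4
  have h5 : LinearMap.BilinForm.toMatrix β S.form = Matrix.of fun i j => S.form (β i) (β j) := by
    ext i j; simp [LinearMap.BilinForm.toMatrix_apply]
  have h6 := hβ.det
  rw [← h5, ← h4, abs_mul, abs_mul] at h6
  have hGp : 0 < |G| := abs_pos.2 hG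
  have h7 : |S.o.det β| ^ 2 ≤ C / |G| := by
    rw [le_div_iff₀ hGp]; nlinarith
  nlinarith [abs_nonneg (S.o.det β)]

/-- An isotropic right ideal `W` is multiplied by `3` by some `t` in the unitary group, and the
inverse of `t` has norm bounded independently of `W`.

Averaging the orthogonal projection `A → W` with the Casimir element gives an idempotent `e` of
bounded norm with `W = e A`. For `f = e†`, isotropy means `f e = 0`, and one takes
`t = 1 + 2 e - (2/3) f - (2/3) e f`, which is `3` on `W` and has inverse `t†`. -/
theorem exists_stretch : ∃ K : ℝ, 0 < K ∧ ∀ W : Submodule ℝ A,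
    (∀ w ∈ W, ∀ r, w * r ∈ W) → (∀ x ∈ W, ∀ y ∈ W, S.form x y = 0) →
    ∃ t, S.σ t * t = 1 ∧ (∀ w ∈ W, t * w = (3 : ℝ) • w) ∧ ∀ x, ‖S.Φ x‖ ≤ K * ‖S.Φ (t * x)‖ := by
  obtain ⟨Km, hKm, hm⟩ := S.exists_mul_bound
  obtain ⟨Ks, hKs, hs⟩ := S.exists_σ_bound
  set Ce : ℝ := ∑ i, Km * ‖S.Φ (S.u i)‖ * ‖S.Φ (S.v i)‖
  have hCe : 0 ≤ Ce := Finset.sum_nonneg fun i _ => by positivity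
  set Ct : ℝ := ‖S.Φ 1‖ + 2 * Ce + Ks * Ce + Km * Ce * (Ks * Ce)
  refine ⟨Km * (Ks * Ct) + 1, by positivity, fun W hW hiso => ?_⟩
  let p : A →ₗ[ℝ] A := S.Φ.symm.toLinearMap ∘ₗ
    ((W.map S.Φ.toLinearMap).starProjection).toLinearMap ∘ₗ S.Φ.toLinearMap
  have hpW : ∀ x, p x ∈ W := by
    intro x
    have := Submodule.starProjection_apply_mem (W.map S.Φ.toLinearMap) (S.Φ x)
    obtain ⟨w, hw, hw'⟩ := this
    have h2 : p x = w := by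
      apply S.Φ.injective
      simpa [p] using hw'.symm
    rwa [h2]
  have hpe : ∀ w ∈ W, p w = w := by
    intro w hw
    apply S.Φ.injective
    have : (W.map S.Φ.toLinearMap).starProjection (S.Φ w) = S.Φ w :=
      Submodule.starProjection_eq_self_iff.2 ⟨w, hw, rfl⟩
    simpa [p] using this
  have hpn : ∀ x, ‖S.Φ (p x)‖ ≤ ‖S.Φ x‖ := by
    intro x
    simpa [p] using Submodule.norm_starProjection_apply_le (W.map S.Φ.toLinearMap) (S.Φ x)
  set e : A := ∑ i, p (S.u i) * S.v i with he
  have heW : e ∈ W := Submodule.sum_mem _ fun i _ => hW _ (hpW _) _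
  have hew : ∀ w ∈ W, e * w = w := by
    intro w hw
    rw [he, Finset.sum_mul, ← S.casimir]
    calc ∑ i, p (w * S.u i) * S.v i = ∑ i, w * (S.u i * S.v i) :=
          Finset.sum_congr rfl fun i _ => by rw [hpe _ (hW w hw _), mul_assoc]
      _ = w := by rw [← Finset.mul_sum, S.casimir_one, mul_one]
  have hee : e * e = e := hew e heW
  set f := S.σ e with hf
  have hff : f * f = f := by rw [hf, ← S.σ_mul, hee]
  have hfe : f * e = 0 := by
    refine S.τ_nondeg _ fun r => ?_
    rw [mul_assoc]
    exact hiso e heW _ (hW e heW r)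
  have hσf : S.σ f = e := S.σ_σ e
  have heb : ‖S.Φ e‖ ≤ Ce := by
    rw [he, map_sum]
    refine (norm_sum_le _ _).trans (Finset.sum_le_sum fun i _ => (hm _ _).trans ?_)
    gcongr
    exact hpn _
  have hfb : ‖S.Φ f‖ ≤ Ks * Ce := (hs e).trans (by gcongr)
  have hefb : ‖S.Φ (e * f)‖ ≤ Km * Ce * (Ks * Ce) := (hm e f).trans (by gcongr)
  set t : A := 1 + (2 : ℝ) • e - (2 / 3 : ℝ) • f - (2 / 3 : ℝ) • (e * f) with ht
  have hσt : S.σ t = 1 + (2 : ℝ) • f - (2 / 3 : ℝ) • e - (2 / 3 : ℝ) • (e * f) := by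
    simp only [ht, map_add, map_sub, map_smul, S.σ_one, S.σ_mul, hσf, ← hf]
  have htt : S.σ t * t = 1 := by
    have h1 : f * (e * f) = 0 := by rw [← mul_assoc, hfe, zero_mul]
    have h2 : e * (e * f) = e * f := by rw [← mul_assoc, hee]
    have h3 : e * f * e = 0 := by rw [mul_assoc, hfe, mul_zero]
    have h4 : e * f * f = e * f := by rw [mul_assoc, hff]
    have h5 : e * f * (e * f) = 0 := by rw [← mul_assoc, h3, zero_mul]
    rw [hσt, ht]
    simp only [add_mul, sub_mul, mul_add, mul_sub, one_mul, mul_one,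
      smul_mul_assoc, mul_smul_comm, hee, hff, hfe, h1, h2, h3, h4, h5, smul_zero]
    module
  refine ⟨t, htt, ?_, ?_⟩
  · intro w hw
    have h1 := hew w hw
    have h2 : f * w = 0 := by rw [← h1, ← mul_assoc, hfe, zero_mul]
    simp only [ht, add_mul, sub_mul, one_mul, smul_mul_assoc, mul_assoc, h1, h2, mul_zero, smul_zero]
    module
  · intro x
    have htb : ‖S.Φ t‖ ≤ Ct := by
      simp only [ht, map_add, map_sub, map_smul]
      refine (norm_sub_le _ _).trans ?_
      have h1 := norm_sub_le (S.Φ 1 + (2 : ℝ) • S.Φ e) ((2 / 3 : ℝ) • S.Φ f)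
      have h2 := norm_add_le (S.Φ 1) ((2 : ℝ) • S.Φ e)
      rw [norm_smul, Real.norm_of_nonneg (by norm_num)] at h1 h2 ⊢
      have h3 : 0 ≤ ‖S.Φ f‖ := norm_nonneg _
      have h4 : 0 ≤ ‖S.Φ (e * f)‖ := norm_nonneg _
      linarith
    calc ‖S.Φ x‖ = ‖S.Φ (S.σ t * (t * x))‖ := by rw [← mul_assoc, htt, one_mul]
      _ ≤ Km * ‖S.Φ (S.σ t)‖ * ‖S.Φ (t * x)‖ := hm _ _
      _ ≤ (Km * (Ks * Ct) + 1) * ‖S.Φ (t * x)‖ := by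
        gcongr
        have := (hs t).trans (mul_le_mul_of_nonneg_left htb hKs.le)
        have := mul_le_mul_of_nonneg_left this hKm.le
        linarith

end TraceAlg

/-! ### Reduction theory under the unitary group -/

theorem exists_lattice_min {d : ℕ} (β : Module.Basis (Fin d) ℝ (EuclideanSpace ℝ (Fin d))) :
    ∃ l : ℝ, 0 < l ∧ ∀ x ∈ Submodule.span ℤ (Set.range β), x ≠ 0 → l ≤ ‖x‖ := by
  let f := LinearMap.toContinuousLinearMap β.equivFun.toLinearMap
  refine ⟨1 / (‖f‖ + 1), by positivity, fun x hx hx0 => ?_⟩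
  rw [div_le_iff₀ (by positivity)]
  have h1 : 1 ≤ ‖f x‖ := by
    obtain ⟨c, hc⟩ := (Submodule.mem_span_range_iff_exists_fun ℤ).1 hx
    have hfx : ∀ i, f x i = c i := by
      intro i
      simp [f, ← hc, Finsupp.single_apply, ← Int.cast_smul_eq_zsmul ℝ]
    have : ∃ i, c i ≠ 0 := by
      by_contra! h
      apply hx0
      rw [← hc]
      simp [h]
    obtain ⟨i, hi⟩ := this
    refine le_trans ?_ (norm_le_pi_norm (f x) i)
    rw [hfx, Real.norm_eq_abs]
    exact_mod_cast Int.one_le_abs hi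
  have h2 := f.le_opNorm x
  nlinarith [norm_nonneg x]

namespace TraceAlg

variable {A : Type*} [Ring A] [Algebra ℝ A] {d : ℕ} (S : TraceAlg A d)

theorem mem_span_map_Φ (β : Module.Basis (Fin d) ℝ A) (y : EuclideanSpace ℝ (Fin d)) :
    y ∈ Submodule.span ℤ (Set.range (β.map S.Φ)) ↔
      ∃ x ∈ Submodule.span ℤ (Set.range β), S.Φ x = y := by
  have : Set.range (β.map S.Φ) = (S.Φ.toLinearMap.restrictScalars ℤ) '' Set.range β := by
    rw [← Set.range_comp]; rfl
  rw [this, Submodule.span_image, Submodule.mem_map]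
  rfl

/-- A good lattice is stable under right multiplication by the elements `o k`. -/
theorem IsGood.mul_mem_span {C : ℝ} {β : Module.Basis (Fin d) ℝ A} (hβ : S.IsGood C β) {x : A}
    (hx : x ∈ Submodule.span ℤ (Set.range β)) (k : Fin d) :
    x * S.o k ∈ Submodule.span ℤ (Set.range β) := by
  induction hx using Submodule.span_induction with
  | mem x h => obtain ⟨i, rfl⟩ := h; exact hβ.mul_mem i k
  | zero => simp
  | add x y _ _ hx hy => rw [add_mul]; exact add_mem hx hy
  | smul a x _ hx => rw [smul_mul_assoc]; exact Submodule.smul_mem _ _ hx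

theorem IsGood.int_span {C : ℝ} {β : Module.Basis (Fin d) ℝ A} (hβ : S.IsGood C β) {x y : A}
    (hx : x ∈ Submodule.span ℤ (Set.range β)) (hy : y ∈ Submodule.span ℤ (Set.range β)) :
    ∃ n : ℤ, S.form x y = n := by
  induction hx using Submodule.span_induction with
  | mem x h =>
    obtain ⟨i, rfl⟩ := h
    induction hy using Submodule.span_induction with
    | mem y h => obtain ⟨j, rfl⟩ := h; exact hβ.int i j
    | zero => exact ⟨0, by simp⟩
    | add x y _ _ hx hy =>
      obtain ⟨m, hm⟩ := hx
      obtain ⟨n, hn⟩ := hy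
      exact ⟨m + n, by simp [hm, hn]⟩
    | smul a x _ hx =>
      obtain ⟨m, hm⟩ := hx
      exact ⟨a * m, by rw [map_zsmul, hm]; simp⟩
  | zero => exact ⟨0, by simp⟩
  | add x y _ _ hx hy =>
    obtain ⟨m, hm⟩ := hx
    obtain ⟨n, hn⟩ := hy
    exact ⟨m + n, by simp [hm, hn]⟩
  | smul a x _ hx =>
    obtain ⟨m, hm⟩ := hx
    exact ⟨a * m, by rw [map_zsmul, LinearMap.smul_apply, hm]; simp⟩

/-- If the minimum of a good lattice is at least `l` with `l` small, then left multiplication by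
some element of the unitary group makes it at least `2 l`.

Let `W i` be the real span of the lattice vectors shorter than `Q ^ i l`. For some `i ≤ d` one has
`W i = W (i + 1)`, and then `W i` is a right ideal because `Q` exceeds the norms of
the right multiplications by the `o k`. It is isotropic because the form is integral on the lattice and less than `1` in absolute value on pairs
of short vectors. The element `t` of `exists_stretch` triples the vectors in `W i`, and the lattice
vectors outside `W i` are so long that `t` leaves them of length at least `2 l`. -/
theorem exists_improve (C : ℝ) : ∃ ε : ℝ, 0 < ε ∧ ∀ β, S.IsGood C β → ∀ l, 0 < l → l < ε →
    (∀ x ∈ Submodule.span ℤ (Set.range β), x ≠ 0 → l ≤ ‖S.Φ x‖) →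
    ∃ t, S.σ t * t = 1 ∧
      ∀ x ∈ Submodule.span ℤ (Set.range β), x ≠ 0 → 2 * l ≤ ‖S.Φ (t * x)‖ := by
  have : FiniteDimensional ℝ A := S.o.finiteDimensional_of_finite
  obtain ⟨Km, hKm, hm⟩ := S.exists_mul_bound
  obtain ⟨Kf, hKf, hf⟩ := S.exists_form_bound
  obtain ⟨K, hK, hst⟩ := S.exists_stretch
  set Q : ℝ := 1 + 2 * K + ∑ k, Km * ‖S.Φ (S.o k)‖
  have hsum : 0 ≤ ∑ k, Km * ‖S.Φ (S.o k)‖ := Finset.sum_nonneg fun k _ => by positivity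
  have hQ1 : 1 ≤ Q := by simp only [Q]; linarith
  have hQK : 2 * K ≤ Q := by simp only [Q]; linarith
  have hQo : ∀ k, Km * ‖S.Φ (S.o k)‖ ≤ Q := fun k => by
    have := Finset.single_le_sum (f := fun k => Km * ‖S.Φ (S.o k)‖) (s := Finset.univ)
      (fun k _ => by positivity) (Finset.mem_univ k)
    simp only [Q]
    linarith
  have hQ0 : 0 < Q := by linarith
  refine ⟨1 / ((Kf + 1) * Q ^ d), by positivity, fun β hβ l hl hlε hmin => ?_⟩
  set L := Submodule.span ℤ (Set.range β)
  let s : ℕ → Set A := fun i => {x | x ∈ L ∧ ‖S.Φ x‖ < Q ^ i * l}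
  let W : ℕ → Submodule ℝ A := fun i => Submodule.span ℝ (s i)
  have hWs : ∀ i, W i ≤ W (i + 1) := by
    intro i
    refine Submodule.span_mono fun x hx => ⟨hx.1, hx.2.trans_le ?_⟩
    gcongr
    omega
  -- The dimensions of the `W i` cannot increase `d + 1` times.
  obtain ⟨i, hid, hi⟩ : ∃ i ≤ d, W i = W (i + 1) := by
    by_contra! h
    have : ∀ i ≤ d + 1, i ≤ Module.finrank ℝ (W i) := by
      intro i
      induction i with
      | zero => simp
      | succ i ih =>
        intro hi
        have h1 := ih (by omega)
        have h2 := Submodule.finrank_lt_finrank_of_lt ((hWs i).lt_of_ne (h i (by omega)))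
        omega
    have h1 := this (d + 1) le_rfl
    have h2 := (W (d + 1)).finrank_le
    rw [Module.finrank_eq_card_basis S.o, Fintype.card_fin] at h2
    omega
  have hideal : ∀ w ∈ W i, ∀ r, w * r ∈ W i := by
    intro w hw r
    induction hw using Submodule.span_induction with
    | mem x h =>
      rw [← S.o.sum_repr r, Finset.mul_sum]
      refine Submodule.sum_mem _ fun k _ => ?_
      rw [mul_smul_comm]
      refine Submodule.smul_mem _ _ ?_
      rw [hi]
      refine Submodule.subset_span ⟨hβ.mul_mem_span S h.1 k, ?_⟩
      calc ‖S.Φ (x * S.o k)‖ ≤ Km * ‖S.Φ x‖ * ‖S.Φ (S.o k)‖ := hm _ _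
        _ = (Km * ‖S.Φ (S.o k)‖) * ‖S.Φ x‖ := by ring
        _ ≤ Q * ‖S.Φ x‖ := by gcongr; exact hQo k
        _ < Q * (Q ^ i * l) := by gcongr; exact h.2
        _ = Q ^ (i + 1) * l := by ring
    | zero => simp
    | add x y _ _ hx hy => rw [add_mul]; exact add_mem hx hy
    | smul a x _ hx => rw [smul_mul_assoc]; exact Submodule.smul_mem _ _ hx
  have hη : Q ^ i * l < 1 / (Kf + 1) := by
    calc Q ^ i * l ≤ Q ^ d * l := by gcongr
      _ < Q ^ d * (1 / ((Kf + 1) * Q ^ d)) := by gcongr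
      _ = 1 / (Kf + 1) := by field_simp
  -- Integrality makes the form vanish on pairs of very short lattice vectors.
  have hss : ∀ x ∈ s i, ∀ y ∈ s i, S.form x y = 0 := by
    intro x hx y hy
    obtain ⟨n, hn⟩ := hβ.int_span S hx.1 hy.1
    have h1 : |S.form x y| < 1 := by
      calc |S.form x y| ≤ Kf * ‖S.Φ x‖ * ‖S.Φ y‖ := hf x y
        _ ≤ Kf * (1 / (Kf + 1)) * (1 / (Kf + 1)) := by
          gcongr
          · exact (hx.2.trans hη).le
          · exact (hy.2.trans hη).le
        _ < 1 := by
          rw [mul_one_div, mul_one_div, div_div, div_lt_one (by positivity)]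
          nlinarith
    rw [hn] at h1 ⊢
    have : n = 0 := Int.abs_lt_one_iff.1 (by exact_mod_cast h1)
    simp [this]
  have hiso : ∀ x ∈ W i, ∀ y ∈ W i, S.form x y = 0 := by
    intro x hx y hy
    induction hx using Submodule.span_induction with
    | mem x h =>
      induction hy using Submodule.span_induction with
      | mem y h' => exact hss x h y h'
      | zero => simp
      | add x y _ _ hx hy => simp [hx, hy]
      | smul a x _ hx => simp [hx]
    | zero => simp
    | add x y _ _ hx hy => simp [hx, hy]
    | smul a x _ hx => simp [hx]
  obtain ⟨t, ht, htW, htK⟩ := hst (W i) hideal hiso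
  refine ⟨t, ht, fun x hx hx0 => ?_⟩
  by_cases hxW : x ∈ W i
  · rw [htW x hxW, map_smul, norm_smul, Real.norm_of_nonneg (by norm_num)]
    have := hmin x hx hx0
    linarith
  · have h1 : Q ^ (i + 1) * l ≤ ‖S.Φ x‖ := by
      by_contra! h
      rw [hi] at hxW
      exact hxW (Submodule.subset_span ⟨hx, h⟩)
    have h2 := htK x
    have h3 : Q * l ≤ Q ^ (i + 1) * l := by
      gcongr
      exact le_self_pow₀ hQ1 (by omega)
    have h4 : 2 * K * l ≤ Q * l := by gcongr
    refine le_of_mul_le_mul_left ?_ hK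
    linarith

/-- Each good lattice is brought by the unitary group to one of minimum at least `ε`: the minimum is
bounded above by Minkowski's theorem, so doubling it by `exists_improve` must stop. -/
theorem exists_min (hd : 0 < d) (C : ℝ) : ∃ ε : ℝ, 0 < ε ∧ ∀ β, S.IsGood C β →
    ∃ t, S.σ t * t = 1 ∧
      ∀ x ∈ Submodule.span ℤ (Set.range β), x ≠ 0 → ε ≤ ‖S.Φ (t * x)‖ := by
  obtain ⟨ε, hε, himp⟩ := S.exists_improve C
  obtain ⟨D, hD⟩ := S.exists_det_bound C
  obtain ⟨T, hT, hmink⟩ := exists_short_off_hyperplane (d := d) D 1 one_pos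
  refine ⟨ε, hε, fun β hβ => ?_⟩
  let P : ℝ → Prop := fun l => ∃ t, S.σ t * t = 1 ∧
      ∀ x ∈ Submodule.span ℤ (Set.range β), x ≠ 0 → l ≤ ‖S.Φ (t * x)‖
  have hPT : ∀ l, P l → l ≤ T := by
    rintro l ⟨t, ht, htl⟩
    obtain ⟨y, hy, hy0, hyT, -⟩ := hmink _ (hD _ (hβ.map S ht))
      (EuclideanSpace.single (⟨0, hd⟩ : Fin d) (1 : ℝ)) (by simp)
    obtain ⟨z, hz, rfl⟩ := (S.mem_span_map_Φ _ y).1 hy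
    obtain ⟨x, hx, rfl⟩ := (S.mem_span_map ht β z).1 hz
    refine (htl x hx ?_).trans hyT
    rintro rfl
    simp at hy0
  obtain ⟨l₀, hl₀, hmin₀⟩ := exists_lattice_min (β.map S.Φ)
  have hP₀ : P l₀ := by
    refine ⟨1, by simp [S.σ_one], fun x hx hx0 => ?_⟩
    rw [one_mul]
    exact hmin₀ _ ((S.mem_span_map_Φ _ _).2 ⟨x, hx, rfl⟩) (by simpa using hx0)
  obtain ⟨l, hl, hPl, hP2l⟩ : ∃ l, 0 < l ∧ P l ∧ ¬ P (2 * l) := by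
    by_contra! h
    have : ∀ k : ℕ, P (2 ^ k * l₀) := by
      intro k
      induction k with
      | zero => simpa using hP₀
      | succ k ih =>
        have := h _ (by positivity) ih
        rwa [← mul_assoc, ← pow_succ'] at this
    obtain ⟨k, hk⟩ := pow_unbounded_of_one_lt (T / l₀) (one_lt_two : (1 : ℝ) < 2)
    have h1 := hPT _ (this k)
    rw [div_lt_iff₀ hl₀] at hk
    linarith
  obtain ⟨t, ht, htl⟩ := hPl
  refine ⟨t, ht, fun x hx hx0 => le_trans ?_ (htl x hx hx0)⟩
  by_contra! hlε
  obtain ⟨t', ht', ht'l⟩ := himp _ (hβ.map S ht) l hl hlε (by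
    intro z hz hz0
    obtain ⟨x, hx, rfl⟩ := (S.mem_span_map ht β z).1 hz
    exact htl x hx (by rintro rfl; simp at hz0))
  refine hP2l ⟨t' * t, ?_, fun x hx hx0 => ?_⟩
  · rw [S.σ_mul, mul_assoc, ← mul_assoc (S.σ t'), ht', one_mul, ht]
  · rw [mul_assoc]
    refine ht'l _ ((S.mem_span_map ht β _).2 ⟨x, hx, rfl⟩) fun h0 => hx0 ?_
    rw [← one_mul x, ← ht, mul_assoc, h0, mul_zero]

/-- Reduction theory for good lattices: there are `d` linearly independent lattice vectors `eᵢ` for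
which all the values `τ(eᵢ† eⱼ oₖ)` are bounded. -/
theorem exists_bounded_tuple (hd : 0 < d) (C : ℝ) : ∃ B : ℝ, ∀ β, S.IsGood C β →
    ∃ e : Fin d → A, LinearIndependent ℝ e ∧
      (∀ i, e i ∈ Submodule.span ℤ (Set.range β)) ∧
      ∀ i j k, |S.form (e i) (e j * S.o k)| ≤ B := by
  obtain ⟨ε, hε, hmin⟩ := S.exists_min hd C
  obtain ⟨D, hD⟩ := S.exists_det_bound C
  obtain ⟨T, hT⟩ := exists_bounded_independent (d := d) D ε hε
  obtain ⟨Km, hKm, hm⟩ := S.exists_mul_bound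
  obtain ⟨Kf, hKf, hf⟩ := S.exists_form_bound
  refine ⟨Kf * T * (Km * T * ∑ k, ‖S.Φ (S.o k)‖), fun β hβ => ?_⟩
  obtain ⟨t, ht, htε⟩ := hmin β hβ
  obtain ⟨e', he', heT⟩ := hT _ (hD _ (hβ.map S ht)) (by
    intro y hy hy0
    obtain ⟨z, hz, rfl⟩ := (S.mem_span_map_Φ _ y).1 hy
    obtain ⟨x, hx, rfl⟩ := (S.mem_span_map ht β z).1 hz
    exact htε x hx (by rintro rfl; simp at hy0))
  have : ∀ i, ∃ x ∈ Submodule.span ℤ (Set.range β), S.Φ (t * x) = e' i := by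
    intro i
    obtain ⟨z, hz, hze⟩ := (S.mem_span_map_Φ _ _).1 (heT i).1
    obtain ⟨x, hx, rfl⟩ := (S.mem_span_map ht β z).1 hz
    exact ⟨x, hx, hze⟩
  choose e he hee using this
  refine ⟨e, ?_, he, fun i j k => ?_⟩
  · refine LinearIndependent.of_comp (S.Φ.toLinearMap ∘ₗ LinearMap.mulLeft ℝ t) ?_
    convert he' using 1
    funext i
    exact hee i
  · have hT0 : ∀ i, ‖S.Φ (t * e i)‖ ≤ T := fun i => by rw [hee]; exact (heT i).2
    have hTn : 0 ≤ T := (norm_nonneg _).trans (hT0 i)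
    rw [← S.form_mul t _ _ ht, ← mul_assoc]
    refine (hf _ _).trans ?_
    gcongr
    · exact hT0 i
    · refine (hm _ _).trans ?_
      gcongr
      · exact hT0 j
      · exact Finset.single_le_sum (f := fun k => ‖S.Φ (S.o k)‖) (fun k _ => norm_nonneg _)
          (Finset.mem_univ k)

end TraceAlg

/-! ### The trace form of the regular representation -/

/-- The trace of the regular representation, `x ↦ tr(L_x)`. -/
noncomputable def regTr (K A : Type*) [Field K] [Ring A] [Algebra K A] : A →ₗ[K] K :=
  (LinearMap.trace K A).comp (Algebra.lmul K A).toLinearMap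

/-- The trace form `(x, y) ↦ tr(L_{xy})`. -/
noncomputable def trForm (K A : Type*) [Field K] [Ring A] [Algebra K A] : LinearMap.BilinForm K A :=
  (LinearMap.mul K A).compr₂ (regTr K A)

section Field

variable {K A : Type*} [Field K] [Ring A] [Algebra K A]

theorem regTr_apply (x : A) : regTr K A x = LinearMap.trace K A (Algebra.lmul K A x) := rfl

theorem trForm_apply (x y : A) : trForm K A x y = regTr K A (x * y) := rfl

theorem algTrace_mul_comm (x y : A) : regTr K A (x * y) = regTr K A (y * x) := by
  rw [regTr_apply, regTr_apply, map_mul (Algebra.lmul K A), map_mul (Algebra.lmul K A),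
    LinearMap.trace_mul_comm]

theorem trForm_isSymm : (trForm K A).IsSymm := ⟨fun x y => algTrace_mul_comm x y⟩

theorem trForm_nondegenerate (h : ∀ x : A, (∀ y, regTr K A (x * y) = 0) → x = 0) :
    (trForm K A).Nondegenerate :=
  ⟨h, fun x hx => h x fun y => by rw [algTrace_mul_comm]; exact hx y⟩

variable {d : ℕ} (hT : (trForm K A).Nondegenerate) (u : Module.Basis (Fin d) K A)

theorem repr_eq_trace (x : A) (i : Fin d) :
    u.repr x i = regTr K A ((trForm K A).dualBasis hT u i * x) := by
  conv_rhs => rw [← u.sum_repr x, ← trForm_apply, map_sum]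
  simp [LinearMap.BilinForm.apply_dualBasis_left]

theorem dual_repr_eq_trace (x : A) (i : Fin d) :
    ((trForm K A).dualBasis hT u).repr x i = regTr K A (x * u i) := by
  rw [LinearMap.BilinForm.dualBasis_repr_apply, trForm_apply]

/-- Left and right multiplication by `b` are adjoint for the trace form, so their matrices in dual
bases are transposes of each other. -/
theorem toMatrix_mulLeft_eq (b : A) :
    LinearMap.toMatrix u u (LinearMap.mulLeft K b) =
      (LinearMap.toMatrix ((trForm K A).dualBasis hT u) ((trForm K A).dualBasis hT u)
        (LinearMap.mulRight K b)).transpose := by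
  ext i j
  rw [Matrix.transpose_apply, LinearMap.toMatrix_apply, LinearMap.toMatrix_apply,
    repr_eq_trace hT, dual_repr_eq_trace]
  simp [mul_assoc]

include hT u in
theorem det_mulRight_eq (b : A) :
    LinearMap.det (LinearMap.mulRight K b) = LinearMap.det (LinearMap.mulLeft K b) := by
  rw [← LinearMap.det_toMatrix u (LinearMap.mulLeft K b), toMatrix_mulLeft_eq hT,
    Matrix.det_transpose, LinearMap.det_toMatrix]

include hT u in
theorem trace_mulRight_eq (b : A) :
    LinearMap.trace K A (LinearMap.mulRight K b) = regTr K A b := by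
  rw [regTr_apply]
  change _ = LinearMap.trace K A (LinearMap.mulLeft K b)
  rw [LinearMap.trace_eq_matrix_trace K u (LinearMap.mulLeft K b), toMatrix_mulLeft_eq hT,
    Matrix.trace_transpose, ← LinearMap.trace_eq_matrix_trace]

/-- `∑ w uᵢ ⊗ vᵢ = ∑ uᵢ ⊗ vᵢ w` for dual bases `u`, `v` of the trace form, expressed by applying a
linear map `p` to the first factor. -/
theorem casimir_identity (p : A →ₗ[K] A) (w : A) :
    ∑ i, p (w * u i) * (trForm K A).dualBasis hT u i =
      ∑ i, p (u i) * (trForm K A).dualBasis hT u i * w := by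
  set v := (trForm K A).dualBasis hT u
  have h1 : ∀ i, p (w * u i) * v i =
      ∑ j, regTr K A (v j * (w * u i)) • (p (u j) * v i) := by
    intro i
    conv_lhs => rw [← u.sum_repr (w * u i)]
    rw [map_sum, Finset.sum_mul]
    refine Finset.sum_congr rfl fun j _ => ?_
    rw [map_smul, smul_mul_assoc, repr_eq_trace hT]
  have h2 : ∀ j, p (u j) * v j * w =
      ∑ i, regTr K A (v j * (w * u i)) • (p (u j) * v i) := by
    intro j
    rw [mul_assoc]
    conv_lhs => rw [← v.sum_repr (v j * w)]
    rw [Finset.mul_sum]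
    refine Finset.sum_congr rfl fun i _ => ?_
    rw [mul_smul_comm, dual_repr_eq_trace, mul_assoc]
  simp only [h1, h2]
  exact Finset.sum_comm

/-- For dual bases `u`, `v` of the trace of the regular representation, `∑ uᵢ vᵢ` is exactly `1`:
its pairing with `z` is `∑ tr(vᵢ z uᵢ) = tr(z)`. -/
theorem casimir_eq_one : ∑ i, u i * (trForm K A).dualBasis hT u i = 1 := by
  set v := (trForm K A).dualBasis hT u with hv
  rw [← sub_eq_zero]
  refine hT.1 _ fun z => ?_
  rw [trForm_apply, sub_mul, map_sub, sub_eq_zero, one_mul, Finset.sum_mul, map_sum,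
    regTr_apply, LinearMap.trace_eq_matrix_trace K u, Matrix.trace]
  refine Finset.sum_congr rfl fun i _ => ?_
  rw [Matrix.diag_apply, LinearMap.toMatrix_apply, repr_eq_trace hT, mul_assoc,
    algTrace_mul_comm, mul_assoc]
  rfl

end Field

/-- The `TraceAlg` structure given by the trace of the regular representation and the Casimir element
of the trace form. -/
noncomputable def TraceAlg.ofTrace {A : Type*} [Ring A] [Algebra ℝ A] {d : ℕ}
    (hT : (trForm ℝ A).Nondegenerate) (o : Module.Basis (Fin d) ℝ A) (σ : A →ₗ[ℝ] A)
    (σ_mul : ∀ x y, σ (x * y) = σ y * σ x) (σ_σ : ∀ x, σ (σ x) = x) : TraceAlg A d where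
  o := o
  σ := σ
  τ := regTr ℝ A
  u := o
  v := (trForm ℝ A).dualBasis hT o
  σ_mul := σ_mul
  σ_σ := σ_σ
  τ_comm := algTrace_mul_comm
  τ_nondeg := fun z h => hT.1 z h
  casimir := casimir_identity hT o
  casimir_one := casimir_eq_one hT o

section Semisimple

variable (E : Type*) [Ring E] [Algebra ℚ E] [FiniteDimensional ℚ E]

/-- The radical of the trace form is an ideal, hence generated by an idempotent `e`. The rank of
`L_e` is its trace `0`, so `e = 0`. -/
theorem trForm_nondegenerate_of_semisimple [IsSemisimpleRing E] : (trForm ℚ E).Nondegenerate := by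
  refine trForm_nondegenerate fun x hx => ?_
  let I : Ideal E :=
    { carrier := {x | ∀ y, regTr ℚ E (x * y) = 0}
      add_mem' := fun {a b} ha hb y => by rw [add_mul, map_add, ha, hb, add_zero]
      zero_mem' := fun y => by rw [zero_mul, map_zero]
      smul_mem' := fun c x hx y => by
        rw [smul_eq_mul, mul_assoc, algTrace_mul_comm, mul_assoc]; exact hx _ }
  obtain ⟨e, he, hI⟩ := IsSemisimpleRing.ideal_eq_span_idempotent I
  have h0 : regTr ℚ E e = 0 := by
    have : e ∈ I := by rw [hI]; exact Ideal.mem_span_singleton_self e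
    simpa using this 1
  have he' : IsIdempotentElem (Algebra.lmul ℚ E e) := by
    unfold IsIdempotentElem
    rw [← map_mul, he.eq]
  have h1 := LinearMap.IsIdempotentElem.eq_zero_of_trace_eq_zero he' h0
  have h2 : e = 0 := by
    have := LinearMap.congr_fun h1 1
    simpa using this
  have hxI : x ∈ I := hx
  rw [hI, h2] at hxI
  simpa using hxI

open TensorProduct in
theorem trace_one_tmul (x : E) :
    regTr ℝ (ℝ ⊗[ℚ] E) (1 ⊗ₜ x) = (regTr ℚ E x : ℝ) := by
  rw [regTr_apply, regTr_apply]
  have := LinearMap.trace_baseChange (Algebra.lmul ℚ E x) ℝ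
  rw [show ((LinearMap.trace ℚ E (Algebra.lmul ℚ E x) : ℚ) : ℝ) =
    algebraMap ℚ ℝ (LinearMap.trace ℚ E (Algebra.lmul ℚ E x)) from rfl, ← this]
  congr 1
  ext y
  simp

open TensorProduct in
theorem trForm_nondegenerate_baseChange (hT : (trForm ℚ E).Nondegenerate) :
    (trForm ℝ (ℝ ⊗[ℚ] E)).Nondegenerate := by
  let u := Module.finBasis ℚ E
  refine (LinearMap.BilinForm.nondegenerate_iff_det_ne_zero (u.baseChange ℝ)).2 ?_
  have h := (LinearMap.BilinForm.nondegenerate_iff_det_ne_zero u).1 hT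
  have h1 : LinearMap.BilinForm.toMatrix (u.baseChange ℝ) (trForm ℝ (ℝ ⊗[ℚ] E)) =
      (algebraMap ℚ ℝ).mapMatrix (LinearMap.BilinForm.toMatrix u (trForm ℚ E)) := by
    ext i j
    simp [LinearMap.BilinForm.toMatrix_apply, trForm_apply, trace_one_tmul]
  rw [h1, ← RingHom.map_det]
  exact (map_ne_zero _).2 h

end Semisimple

/-! ### Transfer of the reduction theorem to the rational algebra -/

section Involution

variable {E : Type*} [Ring E] [Algebra ℚ E]
variable {σ : E →ₗ[ℚ] E} (σ_mul : ∀ x y, σ (x * y) = σ y * σ x) (σ_σ : ∀ x, σ (σ x) = x)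

include σ_mul σ_σ in
theorem mulLeft_involution (x : E) : LinearMap.mulLeft ℚ (σ x) =
    (LinearEquiv.ofInvolutive σ σ_σ).conj (LinearMap.mulRight ℚ x) := by
  ext y
  have h : (LinearEquiv.ofInvolutive σ σ_σ).symm y = σ y := rfl
  rw [LinearEquiv.conj_apply_apply, h]
  change σ x * y = σ (σ y * x)
  rw [σ_mul, σ_σ]

include σ_mul σ_σ in
theorem regTr_involution [FiniteDimensional ℚ E] (hT : (trForm ℚ E).Nondegenerate) (x : E) :
    regTr ℚ E (σ x) = regTr ℚ E x := by
  rw [← trace_mulRight_eq hT (Module.finBasis ℚ E) x, regTr_apply]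
  change LinearMap.trace ℚ E (LinearMap.mulLeft ℚ (σ x)) = _
  rw [mulLeft_involution σ_mul σ_σ, LinearMap.trace_conj']

include σ_mul σ_σ in
theorem det_involution [FiniteDimensional ℚ E] (hT : (trForm ℚ E).Nondegenerate) (x : E) :
    LinearMap.det (LinearMap.mulLeft ℚ (σ x)) = LinearMap.det (LinearMap.mulLeft ℚ x) := by
  rw [← det_mulRight_eq hT (Module.finBasis ℚ E) x, mulLeft_involution σ_mul σ_σ]
  exact LinearMap.det_conj (LinearMap.mulRight ℚ x) (LinearEquiv.ofInvolutive σ σ_σ)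

end Involution

open TensorProduct in
/-- The reduction theorem `TraceAlg.exists_bounded_tuple` for the forms `t(x† ψ y)` over `ℚ` with
`ψ = m α† α`, uniformly in `ψ`. -/
theorem exists_bounded_tuple_rat {E : Type*} [Ring E] [Algebra ℚ E] [FiniteDimensional ℚ E]
    {σ : E →ₗ[ℚ] E} (σ_mul : ∀ x y, σ (x * y) = σ y * σ x) (σ_σ : ∀ x, σ (σ x) = x)
    (hT : (trForm ℚ E).Nondegenerate) {d : ℕ} (hd : 0 < d) (ω : Module.Basis (Fin d) ℚ E) (C : ℝ) :
    ∃ B : ℝ, ∀ (ψ α : E) (m : ℚ), IsUnit α → m ≠ 0 → ψ = m • (σ α * α) →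
      ∀ l : Module.Basis (Fin d) ℚ E,
      (∀ i k, l i * ω k ∈ Submodule.span ℤ (Set.range l)) →
      (∀ i j, ∃ n : ℤ, regTr ℚ E (σ (l i) * ψ * l j) = n) →
      |(((Matrix.of fun i j => regTr ℚ E (σ (l i) * ψ * l j)).det : ℚ) : ℝ)| ≤ C →
      ∃ e : Fin d → E, LinearIndependent ℚ e ∧ (∀ i, e i ∈ Submodule.span ℤ (Set.range l)) ∧
        ∀ i j k, |(regTr ℚ E (σ (e i) * ψ * (e j * ω k)) : ℝ)| ≤ B := by
  have hσA : ∀ x y : ℝ ⊗[ℚ] E,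
      σ.baseChange ℝ (x * y) = σ.baseChange ℝ y * σ.baseChange ℝ x := by
    intro x y
    induction x using TensorProduct.induction_on with
    | zero => simp
    | add x x' hx hx' => rw [add_mul, map_add, hx, hx', map_add, mul_add]
    | tmul r a =>
      induction y using TensorProduct.induction_on with
      | zero => simp
      | add y y' hy hy' => rw [mul_add, map_add, hy, hy', map_add, add_mul]
      | tmul s b => simp [σ_mul, mul_comm]
  have hσσA : ∀ x : ℝ ⊗[ℚ] E, σ.baseChange ℝ (σ.baseChange ℝ x) = x := by
    intro x
    induction x using TensorProduct.induction_on with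
    | zero => simp
    | add x x' hx hx' => rw [map_add, map_add, hx, hx']
    | tmul r a => simp [σ_σ]
  let S : TraceAlg (ℝ ⊗[ℚ] E) d := TraceAlg.ofTrace (trForm_nondegenerate_baseChange E hT)
    (ω.baseChange ℝ) (σ.baseChange ℝ) hσA hσσA
  obtain ⟨B, hB⟩ := S.exists_bounded_tuple hd C
  refine ⟨B, fun ψ α m hα hm hψ l hl hInt hdet => ?_⟩
  -- The map `x ↦ s α x` with `s = √|m|` carries the form `± t(x† ψ y)` to the form `t(x† y)`, which
  -- does not depend on `ψ`.
  obtain ⟨s, hs0, ε, hε, hs⟩ : ∃ s : ℝ, s ≠ 0 ∧ ∃ ε : ℝ, |ε| = 1 ∧ s * s = ε * m := by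
    refine ⟨√|(m : ℝ)|, ?_, SignType.sign (m : ℝ), ?_, ?_⟩
    · rw [Real.sqrt_ne_zero']; simpa using hm
    · rcases lt_or_gt_of_ne (show (m : ℝ) ≠ 0 by exact_mod_cast hm) with h | h
      · simp [sign_neg h]
      · simp [sign_pos h]
    · rw [Real.mul_self_sqrt (abs_nonneg _), sign_mul_self]
  have hε' : ε = 1 ∨ ε = -1 := by
    rcases abs_choice ε with h | h
    · left; linarith
    · right; linarith
  let J : E →ₗ[ℚ] ℝ ⊗[ℚ] E :=
    (LinearMap.lsmul ℝ (ℝ ⊗[ℚ] E) s).restrictScalars ℚ ∘ₗ TensorProduct.mk ℚ ℝ E 1 ∘ₗ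
      LinearMap.mulLeft ℚ α
  have hJ : ∀ x, J x = s • ((1 : ℝ) ⊗ₜ[ℚ] (α * x)) := fun x => rfl
  have hJmul : ∀ x k, J x * S.o k = J (x * ω k) := by
    intro x k
    have : S.o k = (1 : ℝ) ⊗ₜ[ℚ] ω k := by
      change ω.baseChange ℝ k = _
      simp
    rw [this, hJ, hJ, smul_mul_assoc, Algebra.TensorProduct.tmul_mul_tmul, mul_assoc, mul_one]
  have hform : ∀ x y, S.form (J x) (J y) = ε * (regTr ℚ E (σ x * ψ * y) : ℝ) := by
    intro x y
    have h1 : S.form (J x) (J y) =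
        s * (s * S.form ((1 : ℝ) ⊗ₜ[ℚ] (α * x)) ((1 : ℝ) ⊗ₜ[ℚ] (α * y))) := by
      rw [hJ, hJ]; simp
    have h2 : S.form ((1 : ℝ) ⊗ₜ[ℚ] (α * x)) ((1 : ℝ) ⊗ₜ[ℚ] (α * y)) =
        regTr ℚ E (σ (α * x) * (α * y)) := by
      rw [TraceAlg.form_apply, ← trace_one_tmul]
      change regTr ℝ (ℝ ⊗[ℚ] E) (σ.baseChange ℝ _ * _) = _
      simp
    rw [h1, h2, ← mul_assoc, hs, hψ, σ_mul]
    simp [mul_assoc]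
  let αe : E ≃ₗ[ℚ] E := LinearEquiv.ofInjectiveEndo (LinearMap.mulLeft ℚ α)
    hα.mul_right_injective
  have hαe : ∀ x, αe x = α * x := fun _ => rfl
  let β : Module.Basis (Fin d) ℝ (ℝ ⊗[ℚ] E) :=
    ((l.map αe).baseChange ℝ).map (LinearEquiv.smulOfNeZero ℝ _ s hs0)
  have hβ : ∀ i, β i = J (l i) := by
    intro i
    simp [β, hJ, hαe]
  have hspan : ∀ z, z ∈ Submodule.span ℤ (Set.range β) ↔
      ∃ x ∈ Submodule.span ℤ (Set.range l), J x = z := by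
    intro z
    have : Set.range β = (J.restrictScalars ℤ) '' Set.range l := by
      rw [← Set.range_comp]
      congr 1
      funext i
      exact hβ i
    rw [this, Submodule.span_image, Submodule.mem_map]
    rfl
  have hgood : S.IsGood C β := by
    refine ⟨fun i k => ?_, fun i j => ?_, ?_⟩
    · rw [hβ, hJmul]
      exact (hspan _).2 ⟨_, hl i k, rfl⟩
    · obtain ⟨n, hn⟩ := hInt i j
      rw [hβ, hβ, hform, hn]
      rcases hε' with h | h
      · exact ⟨n, by rw [h]; simp⟩
      · exact ⟨-n, by rw [h]; simp⟩
    · have : (Matrix.of fun i j => S.form (β i) (β j)) = ε • (algebraMap ℚ ℝ).mapMatrix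
          (Matrix.of fun i j => regTr ℚ E (σ (l i) * ψ * l j)) := by
        ext i j
        simp [hβ, hform]
      rw [this, Matrix.det_smul, ← RingHom.map_det, abs_mul, abs_pow, hε, one_pow, one_mul]
      exact hdet
  obtain ⟨e, he, hmem, heB⟩ := hB β hgood
  choose x hx hxe using fun i => (hspan _).1 (hmem i)
  refine ⟨x, ?_, hx, fun i j k => ?_⟩
  · refine LinearIndependent.of_comp J ?_
    have : J ∘ x = e := funext hxe
    rw [this]
    exact he.restrict_scalars' ℚ
  · have := heB i j k
    rw [← hxe, ← hxe, hJmul, hform, abs_mul, hε, one_mul] at this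
    exact this

/-! ### Lattices in rational vector spaces and their duals -/

section Lattice

variable {V : Type*} [AddCommGroup V] [Module ℚ V]

/-- `L` is a full `ℤ`-lattice in the rational vector space `V`. -/
def IsLat (L : Submodule ℤ V) : Prop := L.FG ∧ Submodule.span ℚ (L : Set V) = ⊤

theorem IsLat.exists_basis [FiniteDimensional ℚ V] {L : Submodule ℤ V} (h : IsLat L) {d : ℕ}
    (hd : Module.finrank ℚ V = d) :
    ∃ b : Module.Basis (Fin d) ℚ V, Submodule.span ℤ (Set.range b) = L := by
  have : Module.Finite ℤ L := Module.Finite.iff_fg.2 h.1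
  have : Module.IsTorsionFree ℤ V := Module.IsTorsionFree.trans_faithfulSMul ℤ ℚ V
  let b := Module.Free.chooseBasis ℤ L
  have hb : LinearIndependent ℤ (fun i => (b i : V)) :=
    b.linearIndependent.map' L.subtype (Submodule.ker_subtype L)
  have hbQ : LinearIndependent ℚ (fun i => (b i : V)) := (LinearIndependent.iff_fractionRing ℤ ℚ).1 hb
  have hspan : Submodule.span ℤ (Set.range fun i => (b i : V)) = L := by
    have : (Set.range fun i => (b i : V)) = L.subtype '' Set.range b := by
      rw [← Set.range_comp]; rfl
    rw [this, Submodule.span_image, b.span_eq, Submodule.map_top, Submodule.range_subtype]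
  have hspanQ : ⊤ ≤ Submodule.span ℚ (Set.range fun i => (b i : V)) := by
    rw [← h.2, Submodule.span_le]
    intro x hx
    rw [← hspan] at hx
    exact Submodule.span_le_restrictScalars ℤ ℚ _ hx
  let b' := Module.Basis.mk hbQ hspanQ
  have hcard : Fintype.card (Module.Free.ChooseBasisIndex ℤ L) = d := by
    rw [← hd, Module.finrank_eq_card_basis b']
  refine ⟨b'.reindex (Fintype.equivFinOfCardEq hcard), ?_⟩
  have hb' : ⇑b' = fun i => (b i : V) := by
    funext i
    simp [b']
  rw [Module.Basis.range_reindex, hb', hspan]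

theorem isLat_span {ι : Type*} [Finite ι] (b : Module.Basis ι ℚ V) :
    IsLat (Submodule.span ℤ (Set.range b)) := by
  refine ⟨Submodule.fg_span (Set.finite_range b), ?_⟩
  rw [eq_top_iff, ← b.span_eq]
  exact Submodule.span_mono Submodule.subset_span

theorem IsLat.sup {L M : Submodule ℤ V} (hL : IsLat L) (hM : IsLat M) : IsLat (L ⊔ M) := by
  refine ⟨hL.1.sup hM.1, ?_⟩
  rw [eq_top_iff, ← hL.2]
  exact Submodule.span_mono (le_sup_left : L ≤ L ⊔ M)

variable {B : LinearMap.BilinForm ℚ V}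

theorem mem_dual_iff {L : Submodule ℤ V} {x : V} :
    x ∈ B.dualSubmodule L ↔ ∀ y ∈ L, ∃ n : ℤ, B x y = n := by
  rw [LinearMap.BilinForm.mem_dualSubmodule]
  refine forall₂_congr fun y _ => ?_
  rw [Submodule.mem_one]
  exact exists_congr fun n => eq_comm

theorem dual_sup (L M : Submodule ℤ V) :
    B.dualSubmodule (L ⊔ M) = B.dualSubmodule L ⊓ B.dualSubmodule M := by
  ext x
  refine ⟨fun h => ⟨fun y hy => h y (le_sup_left (a := L) hy),
    fun y hy => h y (le_sup_right (a := L) hy)⟩, fun h y hy => ?_⟩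
  obtain ⟨a, ha, b, hb, rfl⟩ := Submodule.mem_sup.1 hy
  rw [map_add]
  exact add_mem (h.1 a ha) (h.2 b hb)

/-- If the integral lattice `L` contains `c` times its dual, then its discriminant, the index of `L`
in its dual, divides `c ^ d`. -/
theorem abs_gram_det_le (hB : B.Nondegenerate) {d : ℕ} (l : Module.Basis (Fin d) ℚ V) {c : ℤ}
    (hc : c ≠ 0)
    (hInt : Submodule.span ℤ (Set.range l) ≤ B.dualSubmodule (Submodule.span ℤ (Set.range l)))
    (hd : ∀ x ∈ B.dualSubmodule (Submodule.span ℤ (Set.range l)),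
      c • x ∈ Submodule.span ℤ (Set.range l)) :
    |(Matrix.of fun i j => B (l i) (l j)).det| ≤ |(c : ℚ)| ^ d := by
  have hl : ∀ i, l i ∈ Submodule.span ℤ (Set.range l) := fun i => Submodule.subset_span ⟨i, rfl⟩
  have h1 : ∀ i j, ∃ n : ℤ, B (l i) (l j) = n := fun i j => mem_dual_iff.1 (hInt (hl i)) _ (hl j)
  choose G hG using h1
  have h2 : ∀ i, ∃ z : Fin d → ℤ, ∑ j, z j • l j = c • B.dualBasis hB l i := by
    intro i
    refine (Submodule.mem_span_range_iff_exists_fun ℤ).1 (hd _ ?_)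
    rw [LinearMap.BilinForm.dualSubmodule_span_of_basis B hB]
    exact Submodule.subset_span ⟨i, rfl⟩
  choose Z hZ using h2
  have hmul : Matrix.of Z * Matrix.of G = c • (1 : Matrix (Fin d) (Fin d) ℤ) := by
    ext i k
    have := congrArg (fun x => B x (l k)) (hZ i)
    simp only [map_sum, LinearMap.sum_apply, map_zsmul, LinearMap.smul_apply, hG,
      LinearMap.BilinForm.apply_dualBasis_left] at this
    rw [Matrix.mul_apply, Matrix.smul_apply, Matrix.one_apply]
    simp only [Matrix.of_apply]
    have h3 : ((∑ j, Z i j * G j k : ℤ) : ℚ) = ((c • if i = k then 1 else 0 : ℤ) : ℚ) := by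
      simp only [zsmul_eq_mul, smul_eq_mul] at this ⊢
      push_cast
      rw [this]
      simp [eq_comm]
    exact_mod_cast h3
  have hdet := congrArg Matrix.det hmul
  rw [Matrix.det_mul, Matrix.det_smul, Matrix.det_one, mul_one, Fintype.card_fin] at hdet
  have hZ0 : (Matrix.of Z).det ≠ 0 := by
    intro h
    rw [h, zero_mul] at hdet
    exact pow_ne_zero d hc hdet.symm
  have hGdet : (Matrix.of fun i j => B (l i) (l j)).det = ((Matrix.of G).det : ℚ) := by
    have : (Matrix.of fun i j => B (l i) (l j)) = (Int.castRingHom ℚ).mapMatrix (Matrix.of G) := by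
      ext i j
      simp [hG]
    rw [this, ← RingHom.map_det]
    rfl
  rw [hGdet]
  have h4 : |(Matrix.of G).det| ≤ |c| ^ d := by
    rw [← abs_pow, ← hdet, abs_mul]
    exact le_mul_of_one_le_left (abs_nonneg _) (Int.one_le_abs hZ0)
  exact_mod_cast h4

variable [FiniteDimensional ℚ V]

theorem IsLat.dual (hB : B.Nondegenerate) {L : Submodule ℤ V} (hL : IsLat L) :
    IsLat (B.dualSubmodule L) := by
  obtain ⟨b, rfl⟩ := hL.exists_basis rfl
  rw [LinearMap.BilinForm.dualSubmodule_span_of_basis B hB]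
  exact isLat_span _

theorem IsLat.dual_dual (hB : B.Nondegenerate) (hs : B.IsSymm) {L : Submodule ℤ V} (hL : IsLat L) :
    B.dualSubmodule (B.dualSubmodule L) = L := by
  obtain ⟨b, rfl⟩ := hL.exists_basis rfl
  exact LinearMap.BilinForm.dualSubmodule_dualSubmodule_of_basis B hB hs b

theorem inf_eq_dual (hB : B.Nondegenerate) (hs : B.IsSymm) {L M : Submodule ℤ V} (hL : IsLat L)
    (hM : IsLat M) : L ⊓ M = B.dualSubmodule (B.dualSubmodule L ⊔ B.dualSubmodule M) := by
  rw [dual_sup, hL.dual_dual hB hs, hM.dual_dual hB hs]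

theorem IsLat.inf (hB : B.Nondegenerate) (hs : B.IsSymm) {L M : Submodule ℤ V} (hL : IsLat L)
    (hM : IsLat M) : IsLat (L ⊓ M) := by
  rw [inf_eq_dual hB hs hL hM]
  exact ((hL.dual hB).sup (hM.dual hB)).dual hB

theorem dual_inf (hB : B.Nondegenerate) (hs : B.IsSymm) {L M : Submodule ℤ V} (hL : IsLat L)
    (hM : IsLat M) : B.dualSubmodule (L ⊓ M) = B.dualSubmodule L ⊔ B.dualSubmodule M := by
  rw [inf_eq_dual hB hs hL hM, ((hL.dual hB).sup (hM.dual hB)).dual_dual hB hs]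

/-- Gluing of two lattices that are nearly self-dual at complementary primes. If `U` is integral and
nearly self-dual away from `m`, and `X` is nearly self-dual away from `n`, with `n` and `m` coprime,
then `L` is integral and `c` times its dual is contained in `L`. With `M = X ∩ X*` and
`M* = X + X*`, one has `L = M + (M* ∩ U)` and `L* = M + (M* ∩ U*)`; these are close to each other at
the primes not dividing `n` because `M` is close to `M*`, and at the primes not dividing `m` because
`U` is close to `U*`. -/
theorem isLat_glue (hB : B.Nondegenerate) (hs : B.IsSymm) {X U : Submodule ℤ V} (hX : IsLat X)
    (hU : IsLat U) {c n m : ℤ} (hnm : IsCoprime n m) (hUint : U ≤ B.dualSubmodule U)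
    (hXint : ∀ x ∈ X, n • x ∈ B.dualSubmodule X)
    (hXd : ∀ x ∈ B.dualSubmodule X, (c * n) • x ∈ X)
    (hUd : ∀ x ∈ B.dualSubmodule U, (c * m) • x ∈ U) {L : Submodule ℤ V}
    (hL : L = X ⊓ B.dualSubmodule X ⊔ (X ⊔ B.dualSubmodule X) ⊓ U) :
    IsLat L ∧ L ≤ B.dualSubmodule L ∧ ∀ x ∈ B.dualSubmodule L, c • x ∈ L := by
  have hXX := hX.dual hB
  set M := X ⊓ B.dualSubmodule X with hM
  have hMd : B.dualSubmodule M = X ⊔ B.dualSubmodule X := by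
    rw [hM, dual_inf hB hs hX hXX, hX.dual_dual hB hs, sup_comm]
  have hMlat : IsLat M := hX.inf hB hs hXX
  rw [← hMd] at hL
  have hMU : IsLat (B.dualSubmodule M ⊓ U) := (hMlat.dual hB).inf hB hs hU
  have hMM : M ≤ B.dualSubmodule M := by rw [hMd]; exact inf_le_left.trans le_sup_left
  have hLd : B.dualSubmodule L = B.dualSubmodule M ⊓ (M ⊔ B.dualSubmodule U) := by
    rw [hL, dual_sup, dual_inf hB hs (hMlat.dual hB) hU, hMlat.dual_dual hB hs]
  refine ⟨hL ▸ hMlat.sup hMU, ?_, fun x hx => ?_⟩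
  · rw [hLd, hL]
    refine sup_le (le_inf hMM le_sup_left) (le_inf inf_le_left ?_)
    exact inf_le_right.trans (hUint.trans le_sup_right)
  · have hn : (c * n) • x ∈ L := by
      rw [hL]
      refine Submodule.mem_sup_left ?_
      rw [hLd, hMd] at hx
      obtain ⟨a, ha, b, hb, rfl⟩ := Submodule.mem_sup.1 hx.1
      rw [smul_add]
      refine add_mem ⟨Submodule.smul_mem _ _ ha, ?_⟩ ⟨hXd b hb, Submodule.smul_mem _ _ hb⟩
      rw [mul_smul]
      exact Submodule.smul_mem _ _ (hXint a ha)
    have hm : (c * m) • x ∈ L := by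
      rw [hLd] at hx
      obtain ⟨hx1, hx2⟩ := hx
      obtain ⟨a, ha, b, hb, rfl⟩ := Submodule.mem_sup.1 hx2
      have hb1 : b ∈ B.dualSubmodule M := by
        simpa using sub_mem hx1 (hMM ha)
      rw [hL, smul_add]
      exact add_mem (Submodule.mem_sup_left (Submodule.smul_mem _ _ ha))
        (Submodule.mem_sup_right ⟨Submodule.smul_mem _ _ hb1, hUd b hb⟩)
    obtain ⟨a, b, hab⟩ := hnm
    have : c • x = a • ((c * n) • x) + b • ((c * m) • x) := by
      rw [smul_smul, smul_smul, ← add_smul]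
      congr 1
      linear_combination (-c) * hab
    rw [this]
    exact add_mem (Submodule.smul_mem _ _ hn) (Submodule.smul_mem _ _ hm)

omit [FiniteDimensional ℚ V] in
theorem IsLat.exists_zsmul_mem {M : Submodule ℤ V} (hM : IsLat M) (x : V) :
    ∃ n : ℤ, n ≠ 0 ∧ n • x ∈ M := by
  have hx : x ∈ Submodule.span ℚ (M : Set V) := hM.2 ▸ Submodule.mem_top
  induction hx using Submodule.span_induction with
  | mem x h => exact ⟨1, one_ne_zero, by simpa using h⟩
  | zero => exact ⟨1, one_ne_zero, by simp⟩
  | add x y _ _ hx hy =>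
    obtain ⟨m, hm, hmx⟩ := hx
    obtain ⟨n, hn, hny⟩ := hy
    refine ⟨m * n, mul_ne_zero hm hn, ?_⟩
    rw [smul_add]
    refine add_mem ?_ ?_
    · rw [mul_comm, mul_smul]
      exact Submodule.smul_mem _ _ hmx
    · rw [mul_smul]
      exact Submodule.smul_mem _ _ hny
  | smul r x _ hx =>
    obtain ⟨m, hm, hmx⟩ := hx
    refine ⟨m * r.den, mul_ne_zero hm (by exact_mod_cast r.den_nz), ?_⟩
    have : (m * r.den : ℤ) • r • x = r.num • m • x := by
      simp only [← Int.cast_smul_eq_zsmul ℚ, smul_smul]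
      congr 1
      push_cast
      rw [mul_assoc, mul_comm (r.den : ℚ), Rat.mul_den_eq_num, mul_comm]
    rw [this]
    exact Submodule.smul_mem _ _ hmx

theorem IsLat.exists_zsmul_le {L M : Submodule ℤ V} (hL : IsLat L) (hM : IsLat M) :
    ∃ n : ℤ, n ≠ 0 ∧ ∀ x ∈ L, n • x ∈ M := by
  obtain ⟨b, rfl⟩ := hL.exists_basis rfl
  choose n hn0 hn using fun i => hM.exists_zsmul_mem (b i)
  refine ⟨∏ i, n i, Finset.prod_ne_zero_iff.2 fun i _ => hn0 i, fun x hx => ?_⟩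
  induction hx using Submodule.span_induction with
  | mem x h =>
    obtain ⟨i, rfl⟩ := h
    obtain ⟨k, hk⟩ := Finset.dvd_prod_of_mem n (Finset.mem_univ i)
    rw [hk, mul_comm, mul_smul]
    exact Submodule.smul_mem _ _ (hn i)
  | zero => simp
  | add x y _ _ hx hy => rw [smul_add]; exact add_mem hx hy
  | smul a x _ hx => rw [smul_comm]; exact Submodule.smul_mem _ _ hx

end Lattice

/-- Up to squares, a nonzero rational `m` is a product `m₁ m₂` of integers with `m₁ ∣ N` and `m₂`
prime to `N`: write it as a squarefree integer `± f` up to squares and take `m₁ = gcd(f, N)`. -/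
theorem exists_split (m : ℚ) (hm : m ≠ 0) (N : ℤ) :
    ∃ (s : ℚ) (m₁ m₂ k : ℤ), s ≠ 0 ∧ m₁ ≠ 0 ∧ m₂ ≠ 0 ∧ m = s ^ 2 * (m₁ * m₂) ∧ N = m₁ * k ∧
      IsCoprime N m₂ := by
  set z : ℤ := m.num * m.den with hz
  have hz0 : z ≠ 0 := mul_ne_zero (Rat.num_ne_zero.2 hm) (by exact_mod_cast m.den_nz)
  obtain ⟨f, b, hfb, hf⟩ := Nat.sq_mul_squarefree z.natAbs
  have hb0 : b ≠ 0 := by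
    rintro rfl
    exact Int.natAbs_ne_zero.2 hz0 (by simpa using hfb.symm)
  have hf0 : f ≠ 0 := hf.ne_zero
  obtain ⟨f₂, hf₂⟩ := Nat.gcd_dvd_left f N.natAbs
  obtain ⟨k, hk⟩ := Nat.gcd_dvd_right f N.natAbs
  set g := f.gcd N.natAbs with hg
  have hg0 : g ≠ 0 := by rintro h; rw [h, zero_mul] at hf₂; exact hf0 hf₂
  have hf₂0 : f₂ ≠ 0 := by rintro h; rw [h, mul_zero] at hf₂; exact hf0 hf₂
  have hcop : Nat.Coprime N.natAbs f₂ := by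
    refine Nat.Coprime.symm (Nat.coprime_of_dvd' fun p hp h1 h2 => ?_)
    exfalso
    have h3 : p ∣ g := Nat.dvd_gcd (hf₂ ▸ h1.mul_left g) h2
    have h4 : p * p ∣ f := hf₂ ▸ mul_dvd_mul h3 h1
    exact hp.one_lt.ne' (Nat.isUnit_iff.1 (hf p h4))
  have hden : (m.den : ℚ) ≠ 0 := by exact_mod_cast m.den_nz
  refine ⟨b / m.den, g, z.sign * f₂, N.sign * k, div_ne_zero (by exact_mod_cast hb0) hden,
    by exact_mod_cast hg0, mul_ne_zero (by simpa using hz0) (by exact_mod_cast hf₂0), ?_, ?_, ?_⟩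
  · have h1 : (z : ℚ) = (b : ℚ) ^ 2 * (g * (z.sign * f₂ : ℤ)) := by
      have : z = (b : ℤ) ^ 2 * (g * (z.sign * f₂)) := by
        conv_lhs => rw [← Int.sign_mul_natAbs z, ← hfb, hf₂]
        push_cast
        ring
      exact_mod_cast this
    have h2 : m = z / (m.den : ℚ) ^ 2 := by
      rw [hz]
      push_cast
      rw [eq_div_iff (pow_ne_zero 2 hden), sq, ← mul_assoc, Rat.mul_den_eq_num]
    conv_lhs => rw [h2, h1]
    push_cast
    field_simp
  · conv_lhs => rw [← Int.sign_mul_natAbs N, hk]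
    push_cast
    ring
  · rw [Int.isCoprime_iff_gcd_eq_one, Int.gcd_def, Int.natAbs_mul, Int.natAbs_natCast,
      Int.natAbs_sign_of_ne_zero hz0, one_mul]
    exact hcop

/-! ### Hermitian trace forms and orders -/

section Order

variable {E : Type*} [Ring E] [Algebra ℚ E]

/-- The bilinear form `(x, y) ↦ tr(x† ψ y)`, with `tr` the trace of the regular representation. -/
noncomputable def hermForm (σ : E →ₗ[ℚ] E) (ψ : E) : LinearMap.BilinForm ℚ E :=
  (trForm ℚ E).comp (LinearMap.mulRight ℚ ψ ∘ₗ σ) LinearMap.id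

theorem hermForm_apply (σ : E →ₗ[ℚ] E) (ψ x y : E) :
    hermForm σ ψ x y = regTr ℚ E (σ x * ψ * y) := rfl

section

variable [FiniteDimensional ℚ E] {σ : E →ₗ[ℚ] E} (σ_mul : ∀ x y, σ (x * y) = σ y * σ x)
  (σ_σ : ∀ x, σ (σ x) = x) (hT : (trForm ℚ E).Nondegenerate)

include σ_mul σ_σ hT in
theorem hermForm_isSymm {ψ : E} (hψ : σ ψ = ψ) : (hermForm σ ψ).IsSymm := by
  refine ⟨fun x y => ?_⟩
  rw [hermForm_apply, hermForm_apply, ← regTr_involution σ_mul σ_σ hT, σ_mul, σ_mul, σ_σ, hψ,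
    mul_assoc]

include σ_mul σ_σ hT in
theorem hermForm_nondegenerate {ψ : E} (hψ : σ ψ = ψ) (hu : IsUnit ψ) :
    (hermForm σ ψ).Nondegenerate := by
  have h : ∀ x, (∀ y, hermForm σ ψ x y = 0) → x = 0 := by
    intro x hx
    have h1 : σ x * ψ = 0 := hT.1 _ hx
    have h2 : σ x = 0 := by simpa using hu.mul_left_injective (h1.trans (zero_mul ψ).symm)
    rw [← σ_σ x, h2, map_zero]
  refine ⟨h, fun x hx => h x fun y => ?_⟩
  rw [← (hermForm_isSymm σ_mul σ_σ hT hψ).eq]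
  exact hx y

end

theorem σ_one_eq {σ : E →ₗ[ℚ] E} (σ_mul : ∀ x y, σ (x * y) = σ y * σ x) (σ_σ : ∀ x, σ (σ x) = x) :
    σ 1 = 1 := by
  have := σ_mul 1 (σ 1)
  simpa [σ_σ] using this.symm

variable {R : Subalgebra ℤ E} {ι : Type*} [Fintype ι] [DecidableEq ι] (ω : Module.Basis ι ℚ E)
  (hω : Submodule.span ℤ (Set.range ω) = Subalgebra.toSubmodule R)

include hω in
/-- Left multiplication by an element of an order with `ℤ`-basis `ω` has an integral matrix. -/
theorem exists_int_matrix {x : E} (hx : x ∈ R) :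
    ∃ Z : Matrix ι ι ℤ, LinearMap.toMatrix ω ω (LinearMap.mulLeft ℚ x) = Z.map (Int.cast) ∧
      ∀ j, x * ω j = ∑ i, Z i j • ω i := by
  have h : ∀ j, ∃ z : ι → ℤ, ∑ i, z i • ω i = x * ω j := by
    intro j
    refine (Submodule.mem_span_range_iff_exists_fun ℤ).1 ?_
    rw [hω]
    have hj : ω j ∈ Subalgebra.toSubmodule R := by
      rw [← hω]
      exact Submodule.subset_span ⟨j, rfl⟩
    exact R.mul_mem hx hj
  choose z hz using h
  refine ⟨Matrix.of fun i j => z j i, ?_, fun j => (hz j).symm⟩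
  ext i j
  rw [LinearMap.toMatrix_apply, LinearMap.mulLeft_apply, ← hz j]
  simp [← Int.cast_smul_eq_zsmul ℚ, Finsupp.single_apply]

include hω in
theorem regTr_int {x : E} (hx : x ∈ R) : ∃ n : ℤ, regTr ℚ E x = n := by
  obtain ⟨Z, hZ, -⟩ := exists_int_matrix ω hω hx
  refine ⟨Z.trace, ?_⟩
  change LinearMap.trace ℚ E (LinearMap.mulLeft ℚ x) = _
  rw [LinearMap.trace_eq_matrix_trace ℚ ω, hZ]
  simp [Matrix.trace]

include hω in
/-- The norm of an element of an order is a multiple of it in the order, by the identity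
`Z adj(Z) = det(Z)` for its matrix `Z`. -/
theorem exists_norm_mul {x : E} (hx : x ∈ R) :
    ∃ N : ℤ, LinearMap.det (LinearMap.mulLeft ℚ x) = N ∧ ∃ y ∈ R, x * y = N := by
  obtain ⟨Z, hZ, hxω⟩ := exists_int_matrix ω hω hx
  refine ⟨Z.det, ?_, ?_⟩
  · rw [← LinearMap.det_toMatrix ω, hZ]
    exact ((Int.castRingHom ℚ).map_det Z).symm
  · have h1 : (1 : E) ∈ Submodule.span ℤ (Set.range ω) := by
      rw [hω]; exact one_mem R
    obtain ⟨c, hc⟩ := (Submodule.mem_span_range_iff_exists_fun ℤ).1 h1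
    refine ⟨∑ i, (Z.adjugate.mulVec c) i • ω i, ?_, ?_⟩
    · rw [← Subalgebra.mem_toSubmodule, ← hω]
      exact Submodule.sum_mem _ fun i _ =>
        Submodule.smul_mem _ _ (Submodule.subset_span ⟨i, rfl⟩)
    · have h2 : Z.mulVec (Z.adjugate.mulVec c) = Z.det • c := by
        rw [Matrix.mulVec_mulVec, Matrix.mul_adjugate, Matrix.smul_mulVec, Matrix.one_mulVec]
      rw [Finset.mul_sum]
      simp only [mul_smul_comm, hxω, Finset.smul_sum, smul_smul]
      rw [Finset.sum_comm]
      simp only [← Finset.sum_smul]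
      have h3 : ∀ i, ∑ j, (Z.adjugate.mulVec c) j * Z i j = Z.det * c i := by
        intro i
        rw [← smul_eq_mul, ← Pi.smul_apply, ← h2]
        exact Finset.sum_congr rfl fun j _ => mul_comm _ _
      simp only [h3, mul_smul, ← Finset.smul_sum, hc]
      simp
end Order

/-! ### A nearly unimodular lattice attached to `q` -/

/-- If `a† q a = m` is a nonzero rational, then `q = m₁ ψ` with `ψ = m₂ α† α`, where `m₁` divides
`N = det(L_q)`, and there is a right `R`-lattice with basis `l` on which `tr(x† ψ y)` is integral
with bounded discriminant, and which is contained in `R` after multiplication by `c k`, where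
`k = N / m₁`.

Up to squares `m = m₁ m₂` with `m₁ ∣ N` and `m₂` prime to `N` (`exists_split`), and `α = s a⁻¹` for
a suitable rational `s`. Away from `N` the lattice `R` is nearly self-dual for the form, and away
from `m₂` the lattice `α⁻¹ R` is; the lattice `L` comes from gluing the two by `isLat_glue`. -/
theorem exists_config {E : Type*} [Ring E] [Algebra ℚ E] [FiniteDimensional ℚ E]
    {σ : E →ₗ[ℚ] E} (σ_mul : ∀ x y, σ (x * y) = σ y * σ x) (σ_σ : ∀ x, σ (σ x) = x)
    (hT : (trForm ℚ E).Nondegenerate) {R : Subalgebra ℤ E} (hRσ : ∀ x ∈ R, σ x ∈ R)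
    {d : ℕ} (ω : Module.Basis (Fin d) ℚ E)
    (hω : Submodule.span ℤ (Set.range ω) = Subalgebra.toSubmodule R) :
    ∃ c : ℤ, c ≠ 0 ∧ ∀ q ∈ R, ∀ a : E, IsUnit a → ∀ m : ℚ, m ≠ 0 →
      σ a * q * a = algebraMap ℚ E m →
      ∃ (N m₁ m₂ k : ℤ) (ψ α : E) (l : Module.Basis (Fin d) ℚ E),
        LinearMap.det (LinearMap.mulLeft ℚ q) = N ∧ N ≠ 0 ∧ m₁ ≠ 0 ∧ m₂ ≠ 0 ∧ N = m₁ * k ∧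
        IsUnit α ∧ ψ = (m₂ : ℚ) • (σ α * α) ∧ q = (m₁ : ℚ) • ψ ∧
        (∀ i j, l i * ω j ∈ Submodule.span ℤ (Set.range l)) ∧
        (∀ i j, ∃ n : ℤ, regTr ℚ E (σ (l i) * ψ * l j) = n) ∧
        |(Matrix.of fun i j => regTr ℚ E (σ (l i) * ψ * l j)).det| ≤ |(c : ℚ)| ^ d ∧
        ∀ x ∈ Submodule.span ℤ (Set.range l), (c * k) • x ∈ R := by
  have hσ1 := σ_one_eq σ_mul σ_σ
  set X : Submodule ℤ E := Subalgebra.toSubmodule R with hX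
  have hXmem : ∀ x, x ∈ X ↔ x ∈ R := fun x => Iff.rfl
  have hXlat : IsLat X := hω ▸ isLat_span ω
  have hdim : Module.finrank ℚ E = d := by rw [Module.finrank_eq_card_basis ω, Fintype.card_fin]
  have hnd1 := hermForm_nondegenerate σ_mul σ_σ hT hσ1 isUnit_one
  -- `c` clears the denominators of the dual of `R` under `(x, y) ↦ t(x† y)`.
  obtain ⟨c, hc0, hc⟩ := (hXlat.dual hnd1).exists_zsmul_le hXlat
  have hcD : ∀ x, (∀ y ∈ R, ∃ n : ℤ, regTr ℚ E (σ x * y) = n) → c • x ∈ R := by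
    intro x hx
    refine hc x (mem_dual_iff.2 fun y hy => ?_)
    rw [hermForm_apply, mul_one]
    exact hx y hy
  refine ⟨c, hc0, fun q hq a ha m hm hqa => ?_⟩
  obtain ⟨N, hN, q', hq', hqq'⟩ := exists_norm_mul ω hω hq
  obtain ⟨s, m₁, m₂, k, hs, hm₁, hm₂, hmm, hNk, hcop⟩ := exists_split m hm N
  obtain ⟨a, rfl⟩ := ha
  set α : E := s • (↑a⁻¹ : E) with hα
  set b : E := s⁻¹ • (a : E) with hb
  have hαb : α * b = 1 := by simp [hα, hb, hs]
  have hbα : b * α = 1 := by simp [hα, hb, hs]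
  have hαu : IsUnit α := ⟨⟨α, b, hαb, hbα⟩, rfl⟩
  have hσαu : IsUnit (σ α) :=
    ⟨⟨σ α, σ b, by rw [← σ_mul, hbα, hσ1], by rw [← σ_mul, hαb, hσ1]⟩, rfl⟩
  have hcast : ∀ n : ℤ, n ≠ 0 → ∀ x : E, IsUnit x → IsUnit ((n : ℚ) • x) := by
    intro n hn x hx
    rw [Algebra.smul_def]
    exact ((isUnit_iff_ne_zero.2 (by exact_mod_cast hn : (n : ℚ) ≠ 0)).map (algebraMap ℚ E)).mul hx
  set ψ : E := (m₂ : ℚ) • (σ α * α) with hψ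
  have hψu : IsUnit ψ := hcast _ hm₂ _ (hσαu.mul hαu)
  have hσψ : σ ψ = ψ := by rw [hψ, map_smul, σ_mul, σ_σ]
  have hqψ : q = (m₁ : ℚ) • ψ := by
    have h1 : σ (↑a⁻¹ : E) * σ (a : E) = 1 := by rw [← σ_mul, Units.mul_inv, hσ1]
    have h2 : q = σ (↑a⁻¹ : E) * (σ (a : E) * q * a) * (↑a⁻¹ : E) := by
      rw [mul_assoc (σ (a : E)), ← mul_assoc, h1, one_mul, Units.mul_inv_cancel_right]
    rw [h2, hqa, hψ, hα, map_smul, Algebra.algebraMap_eq_smul_one]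
    simp only [smul_mul_assoc, mul_smul_comm, smul_smul, mul_one]
    congr 1
    rw [hmm]
    ring
  clear_value ψ α b
  have hqu : IsUnit q := hqψ ▸ hcast _ hm₁ _ hψu
  have hN0 : N ≠ 0 := by
    obtain ⟨u, rfl⟩ := hqu
    rintro rfl
    have := congrArg LinearMap.det (LinearMap.mulLeft_mul ℚ E (u : E) (↑u⁻¹ : E))
    rw [Units.mul_inv, LinearMap.mulLeft_one, LinearMap.det_id, LinearMap.det_comp, hN] at this
    simp at this
  have hq'q : q' * q = N := by
    have : q * (q' * q) = q * N := by
      rw [← mul_assoc, hqq']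
      exact Int.cast_comm N q
    exact hqu.mul_right_injective this
  set B := hermForm σ ψ with hB
  have hBnd : B.Nondegenerate := hermForm_nondegenerate σ_mul σ_σ hT hσψ hψu
  have hBs : B.IsSymm := hermForm_isSymm σ_mul σ_σ hT hσψ
  set U : Submodule ℤ E := X.map (LinearMap.mulLeft ℤ b) with hU
  have hUmem : ∀ x, x ∈ U ↔ ∃ r ∈ R, b * r = x := fun x => Iff.rfl
  have hUlat : IsLat U := by
    refine ⟨hXlat.1.map _, ?_⟩
    have h1 : (U : Set E) = (LinearMap.mulLeft ℚ b) '' (X : Set E) := rfl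
    rw [h1, Submodule.span_image, hXlat.2, Submodule.map_top, LinearMap.range_eq_top]
    intro y
    exact ⟨α * y, by rw [LinearMap.mulLeft_apply, ← mul_assoc, hbα, one_mul]⟩
  -- On `U = α⁻¹ R` the form is `m₂` times the trace form of `R`.
  have hBb : ∀ x r, B x (b * r) = regTr ℚ E (σ ((m₂ : ℚ) • (α * x)) * r) := by
    intro x r
    rw [hB, hermForm_apply, hψ, map_smul, σ_mul]
    congr 1
    simp only [smul_mul_assoc, mul_smul_comm, mul_assoc]
    rw [← mul_assoc α b r, hαb, one_mul]
  have hInt : ∀ x ∈ R, ∃ n : ℤ, regTr ℚ E x = n := fun x hx => regTr_int ω hω hx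
  have hUint : U ≤ B.dualSubmodule U := by
    intro x hx
    obtain ⟨r, hr, rfl⟩ := (hUmem x).1 hx
    refine mem_dual_iff.2 fun y hy => ?_
    obtain ⟨t, ht, rfl⟩ := (hUmem y).1 hy
    rw [hBb, ← mul_assoc, hαb, one_mul, Int.cast_smul_eq_zsmul]
    exact hInt _ (R.mul_mem (hRσ _ (R.toSubmodule.smul_mem _ hr)) ht)
  have hψq : ∀ x, (m₁ : ℚ) • (ψ * x) = q * x := fun x => by rw [hqψ, smul_mul_assoc]
  have hXint : ∀ x ∈ X, N • x ∈ B.dualSubmodule X := by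
    intro x hx
    refine mem_dual_iff.2 fun y hy => ?_
    have h1 : B (N • x) y = regTr ℚ E (k • (σ x * (q * y))) := by
      rw [hB, hermForm_apply, ← hψq, hNk]
      congr 1
      simp only [← Int.cast_smul_eq_zsmul ℚ, map_smul, smul_mul_assoc, mul_smul_comm, smul_smul,
        mul_assoc]
      congr 1
      push_cast
      ring
    rw [h1]
    exact hInt _ (R.toSubmodule.smul_mem _ (R.mul_mem (hRσ x hx) (R.mul_mem hq hy)))
  have hXk : ∀ x ∈ B.dualSubmodule X, (c * k) • x ∈ R := by
    intro x hx
    have h1 : c • (ψ * x) ∈ R := by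
      refine hcD _ fun y hy => ?_
      rw [σ_mul, hσψ]
      exact mem_dual_iff.1 hx y hy
    have h2 : (c * k) • x = q' * (c • (ψ * x)) := by
      have h3 : (m₁ : ℚ) • ((c * k) • x) = (m₁ : ℚ) • (q' * (c • (ψ * x))) := by
        rw [← mul_smul_comm, smul_comm (m₁ : ℚ) c, hψq, mul_smul_comm, ← mul_assoc, hq'q,
          ← zsmul_eq_mul, hNk]
        simp only [← Int.cast_smul_eq_zsmul ℚ, smul_smul]
        congr 1
        push_cast
        ring
      exact smul_right_injective E (by exact_mod_cast hm₁ : (m₁ : ℚ) ≠ 0) h3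
    rw [h2]
    exact R.mul_mem hq' h1
  have hXd : ∀ x ∈ B.dualSubmodule X, (c * N) • x ∈ X := by
    intro x hx
    have : (c * N) • x = m₁ • ((c * k) • x) := by
      rw [smul_smul, hNk]
      congr 1
      ring
    rw [this]
    exact X.smul_mem _ (hXk x hx)
  have hUd : ∀ x ∈ B.dualSubmodule U, (c * m₂) • x ∈ U := by
    intro x hx
    have h1 : c • ((m₂ : ℚ) • (α * x)) ∈ R := by
      refine hcD _ fun y hy => ?_
      rw [← hBb]
      exact mem_dual_iff.1 hx _ ⟨y, hy, rfl⟩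
    refine (hUmem _).2 ⟨_, h1, ?_⟩
    rw [mul_smul_comm, mul_smul_comm, ← mul_assoc, hbα, one_mul, Int.cast_smul_eq_zsmul, smul_smul]
  obtain ⟨hLlat, hLint, hLd⟩ :=
    isLat_glue hBnd hBs hXlat hUlat hcop hUint hXint hXd hUd rfl
  set L := X ⊓ B.dualSubmodule X ⊔ (X ⊔ B.dualSubmodule X) ⊓ U with hL
  have hXmul : ∀ x ∈ X, ∀ r ∈ R, x * r ∈ X := fun x hx r hr => R.mul_mem hx hr
  have hXdmul : ∀ x ∈ B.dualSubmodule X, ∀ r ∈ R, x * r ∈ B.dualSubmodule X := by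
    intro x hx r hr
    refine mem_dual_iff.2 fun y hy => ?_
    obtain ⟨n, hn⟩ := mem_dual_iff.1 hx _ (R.mul_mem hy (hRσ r hr))
    refine ⟨n, ?_⟩
    rw [← hn, hB, hermForm_apply, hermForm_apply, σ_mul, mul_assoc, mul_assoc, algTrace_mul_comm]
    simp only [mul_assoc]
  have hUmul : ∀ x ∈ U, ∀ r ∈ R, x * r ∈ U := by
    intro x hx r hr
    obtain ⟨t, ht, rfl⟩ := (hUmem x).1 hx
    exact (hUmem _).2 ⟨t * r, R.mul_mem ht hr, by rw [mul_assoc]⟩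
  have hsup : ∀ x ∈ X ⊔ B.dualSubmodule X, ∀ r ∈ R, x * r ∈ X ⊔ B.dualSubmodule X := by
    intro x hx r hr
    obtain ⟨y, hy, z, hz, rfl⟩ := Submodule.mem_sup.1 hx
    rw [add_mul]
    exact add_mem (Submodule.mem_sup_left (hXmul y hy r hr))
      (Submodule.mem_sup_right (hXdmul z hz r hr))
  have hLmul : ∀ x ∈ L, ∀ r ∈ R, x * r ∈ L := by
    intro x hx r hr
    obtain ⟨y, hy, z, hz, rfl⟩ := Submodule.mem_sup.1 hx
    rw [add_mul]
    exact add_mem (Submodule.mem_sup_left ⟨hXmul y hy.1 r hr, hXdmul y hy.2 r hr⟩)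
      (Submodule.mem_sup_right ⟨hsup z hz.1 r hr, hUmul z hz.2 r hr⟩)
  have hLsup : L ≤ X ⊔ B.dualSubmodule X :=
    sup_le (inf_le_left.trans le_sup_left) inf_le_left
  obtain ⟨l, hl⟩ := hLlat.exists_basis hdim
  have hlmem : ∀ i, l i ∈ L := fun i => hl ▸ Submodule.subset_span ⟨i, rfl⟩
  have hωR : ∀ j, ω j ∈ R := fun j => by
    rw [← hXmem, ← hω]
    exact Submodule.subset_span ⟨j, rfl⟩
  refine ⟨N, m₁, m₂, k, ψ, α, l, hN, hN0, hm₁, hm₂, hNk, hαu, hψ, hqψ, fun i j => ?_,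
    fun i j => ?_, ?_, fun x hx => ?_⟩
  · rw [hl]
    exact hLmul _ (hlmem i) _ (hωR j)
  · exact mem_dual_iff.1 (hLint (hlmem i)) _ (hlmem j)
  · exact abs_gram_det_le hBnd l hc0 (by rw [hl]; exact hLint) (by rw [hl]; exact hLd)
  · rw [hl] at hx
    obtain ⟨y, hy, z, hz, rfl⟩ := Submodule.mem_sup.1 (hLsup hx)
    rw [smul_add]
    exact add_mem (X.smul_mem _ hy) (hXk z hz)

/-! ### Finiteness and the degree bound -/

/-- For the forms and lattices of `exists_bounded_tuple_rat`, the lattice contains some `x` for which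
`x† ψ x` is a nonzero rational number of bounded size.

On the bounded tuple `e`, the integers `t(eᵢ† ψ eⱼ ωₖ)` are bounded, so they take only finitely many
values, and by nondegeneracy of `t` they determine the matrix `eᵢ† ψ eⱼ`. Such a matrix represents a
nonzero rational at some integer vector, a multiple of the coordinates of `α⁻¹`. One choice of such a
rational for each of the finitely many matrices gives the bound. -/
theorem exists_int_value {E : Type*} [Ring E] [Algebra ℚ E] [FiniteDimensional ℚ E]
    {σ : E →ₗ[ℚ] E} (σ_mul : ∀ x y, σ (x * y) = σ y * σ x) (σ_σ : ∀ x, σ (σ x) = x)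
    (hT : (trForm ℚ E).Nondegenerate) {d : ℕ} (hd : 0 < d) (ω : Module.Basis (Fin d) ℚ E)
    (C : ℝ) :
    ∃ M : ℚ, ∀ (ψ α : E) (m : ℚ), IsUnit α → m ≠ 0 → ψ = m • (σ α * α) →
      ∀ l : Module.Basis (Fin d) ℚ E,
        (∀ i k, l i * ω k ∈ Submodule.span ℤ (Set.range l)) →
        (∀ i j, ∃ n : ℤ, regTr ℚ E (σ (l i) * ψ * l j) = n) →
        |(((Matrix.of fun i j => regTr ℚ E (σ (l i) * ψ * l j)).det : ℚ) : ℝ)| ≤ C →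
        ∃ x ∈ Submodule.span ℤ (Set.range l), ∃ ν : ℚ, ν ≠ 0 ∧ |ν| ≤ M ∧
          σ x * ψ * x = algebraMap ℚ E ν := by
  obtain ⟨B, hB⟩ := exists_bounded_tuple_rat σ_mul σ_σ hT hd ω C
  -- `Q T ν`: every matrix `h` over `E` whose trace array is `T` represents `ν` at the same integer
  -- vector.
  let Q : (Fin d → Fin d → Fin d → ℤ) → ℚ → Prop := fun T ν =>
    ν ≠ 0 ∧ ∃ z : Fin d → ℤ, ∀ h : Fin d → Fin d → E,
      (∀ i j k, regTr ℚ E (h i j * ω k) = T i j k) →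
      ∑ i, ∑ j, (z i * z j) • h i j = algebraMap ℚ E ν
  let S : Set (Fin d → Fin d → Fin d → ℤ) :=
    {T | ∀ i, T i ∈ {T | ∀ i, T i ∈ {T | ∀ i, T i ∈ Set.Icc (-⌊B⌋) ⌊B⌋}}}
  have hS : S.Finite := Set.Finite.pi' fun _ => Set.Finite.pi' fun _ => Set.Finite.pi' fun _ =>
    Set.finite_Icc _ _
  have hf : ∀ T, ∃ ν, (∃ ν', Q T ν') → Q T ν := by
    intro T
    by_cases h : ∃ ν', Q T ν'
    · exact ⟨h.choose, fun _ => h.choose_spec⟩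
    · exact ⟨0, fun h' => absurd h' h⟩
  choose f hf using hf
  refine ⟨∑ T ∈ hS.toFinset, |f T|, fun ψ α m hα hm hψ l hlω hInt hdet => ?_⟩
  obtain ⟨e, heli, hel, heB⟩ := hB ψ α m hα hm hψ l hlω hInt hdet
  have hmul : ∀ x ∈ Submodule.span ℤ (Set.range l), ∀ k,
      x * ω k ∈ Submodule.span ℤ (Set.range l) := by
    intro x hx k
    induction hx using Submodule.span_induction with
    | mem x hx => obtain ⟨i, rfl⟩ := hx; exact hlω i k
    | zero => rw [zero_mul]; exact zero_mem _
    | add x y _ _ hx hy => rw [add_mul]; exact add_mem hx hy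
    | smul a x _ hx => rw [smul_mul_assoc]; exact Submodule.smul_mem _ _ hx
  have hInt' : ∀ x ∈ Submodule.span ℤ (Set.range l), ∀ y ∈ Submodule.span ℤ (Set.range l),
      ∃ n : ℤ, regTr ℚ E (σ x * ψ * y) = n := by
    intro x hx y hy
    induction hx using Submodule.span_induction with
    | mem x hx =>
      obtain ⟨i, rfl⟩ := hx
      induction hy using Submodule.span_induction with
      | mem y hy => obtain ⟨j, rfl⟩ := hy; exact hInt i j
      | zero => exact ⟨0, by simp⟩
      | add y z _ _ hy hz =>
        obtain ⟨n, hn⟩ := hy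
        obtain ⟨p, hp⟩ := hz
        exact ⟨n + p, by rw [mul_add, map_add, hn, hp]; push_cast; rfl⟩
      | smul a y _ hy =>
        obtain ⟨n, hn⟩ := hy
        exact ⟨a * n, by rw [mul_smul_comm, map_zsmul, hn]; simp⟩
    | zero => exact ⟨0, by simp⟩
    | add y z _ _ hy hz =>
      obtain ⟨n, hn⟩ := hy
      obtain ⟨p, hp⟩ := hz
      exact ⟨n + p, by rw [map_add, add_mul, add_mul, map_add, hn, hp]; push_cast; rfl⟩
    | smul a y _ hy =>
      obtain ⟨n, hn⟩ := hy
      exact ⟨a * n, by rw [map_zsmul, smul_mul_assoc, smul_mul_assoc, map_zsmul, hn]; simp⟩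
  have hTe : ∀ i j k, ∃ n : ℤ, regTr ℚ E (σ (e i) * ψ * e j * ω k) = n := by
    intro i j k
    rw [mul_assoc]
    exact hInt' _ (hel i) _ (hmul _ (hel j) k)
  choose T hTe using hTe
  have hTS : T ∈ S := by
    simp only [S, Set.mem_ofPred_eq, Set.mem_Icc]
    intro i j k
    have h1 := heB i j k
    rw [← mul_assoc, hTe, Rat.cast_intCast, ← Int.cast_abs] at h1
    exact abs_le.1 (Int.le_floor.2 h1)
  have hsum : ∀ z : Fin d → ℤ, σ (∑ i, z i • e i) * ψ * (∑ j, z j • e j) =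
      ∑ i, ∑ j, (z i * z j) • (σ (e i) * ψ * e j) := by
    intro z
    rw [map_sum, Finset.sum_mul, Finset.sum_mul]
    refine Finset.sum_congr rfl fun i _ => ?_
    rw [Finset.mul_sum]
    refine Finset.sum_congr rfl fun j _ => ?_
    rw [map_zsmul, smul_mul_assoc, smul_mul_assoc, mul_smul_comm, smul_smul]
  have hex : ∃ ν', Q T ν' := by
    have hdim : Module.finrank ℚ E = d := by
      rw [Module.finrank_eq_card_basis ω, Fintype.card_fin]
    have : Nonempty (Fin d) := ⟨⟨0, hd⟩⟩
    let e' := basisOfLinearIndependentOfCardEqFinrank heli (by rw [hdim, Fintype.card_fin])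
    have he' : ⇑e' = e := coe_basisOfLinearIndependentOfCardEqFinrank _ _
    obtain ⟨u, rfl⟩ := hα
    obtain ⟨n, hn0, hn⟩ := (isLat_span e').exists_zsmul_mem (↑u⁻¹ : E)
    rw [he'] at hn
    obtain ⟨z, hz⟩ := (Submodule.mem_span_range_iff_exists_fun ℤ).1 hn
    have hn0' : (n : ℚ) ≠ 0 := by exact_mod_cast hn0
    refine ⟨n * n * m, mul_ne_zero (mul_ne_zero hn0' hn0') hm, z, fun h hh => ?_⟩
    -- By nondegeneracy of the trace form, the array `T` determines `h`.
    have hheq : ∀ i j, h i j = σ (e i) * ψ * e j := by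
      intro i j
      rw [← sub_eq_zero]
      refine hT.1 _ fun y => ?_
      have : trForm ℚ E (h i j - σ (e i) * ψ * e j) = 0 := by
        refine ω.ext fun k => ?_
        rw [trForm_apply, sub_mul, map_sub, hh, hTe, sub_self]
        rfl
      rw [this]
      rfl
    simp only [hheq]
    rw [← hsum, hz, hψ, map_zsmul]
    have h1 : σ (↑u⁻¹ : E) * σ (u : E) = 1 := by
      rw [← σ_mul, Units.mul_inv, σ_one_eq σ_mul σ_σ]
    have h2 : σ (↑u⁻¹ : E) * (σ (u : E) * u) * (↑u⁻¹ : E) = 1 := by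
      rw [← mul_assoc, h1, one_mul, Units.mul_inv]
    simp only [← Int.cast_smul_eq_zsmul ℚ, smul_mul_assoc, mul_smul_comm, smul_smul, h2]
    rw [Algebra.algebraMap_eq_smul_one]
    congr 1
    ring
  obtain ⟨hν, z, hz⟩ := hf T hex
  refine ⟨∑ i, z i • e i, Submodule.sum_mem _ fun i _ => Submodule.smul_mem _ _ (hel i), f T, hν,
    ?_, ?_⟩
  · exact Finset.single_le_sum (f := fun T => |f T|) (fun _ _ => abs_nonneg _)
      (hS.mem_toFinset.2 hTS)
  · rw [hsum]
    exact hz _ hTe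

/-- A rational number lying in an order is an integer. -/
theorem int_of_algebraMap_mem {E : Type*} [Ring E] [Algebra ℚ E] {R : Subalgebra ℤ E} {d : ℕ}
    (hd : 0 < d) (ω : Module.Basis (Fin d) ℚ E)
    (hω : Submodule.span ℤ (Set.range ω) = Subalgebra.toSubmodule R) {r : ℚ}
    (hr : algebraMap ℚ E r ∈ R) : ∃ n : ℤ, r = n := by
  obtain ⟨Z, hZ, -⟩ := exists_int_matrix ω hω hr
  refine ⟨Z ⟨0, hd⟩ ⟨0, hd⟩, ?_⟩
  have := congrFun (congrFun hZ ⟨0, hd⟩) ⟨0, hd⟩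
  rw [LinearMap.toMatrix_apply, LinearMap.mulLeft_apply, Algebra.algebraMap_eq_smul_one,
    smul_mul_assoc, one_mul] at this
  simpa using this

theorem regNorm_mul {E : Type*} [Ring E] [Algebra ℚ E] (x y : E) :
    regNorm E (x * y) = regNorm E x * regNorm E y := by
  rw [regNorm, LinearMap.mulLeft_mul, LinearMap.det_comp, abs_mul]
  rfl

theorem regNorm_algebraMap {E : Type*} [Ring E] [Algebra ℚ E] (r : ℚ) :
    regNorm E (algebraMap ℚ E r) = |r| ^ Module.finrank ℚ E := by
  have : LinearMap.mulLeft ℚ (algebraMap ℚ E r) = r • LinearMap.id := by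
    ext x
    simp [Algebra.smul_def]
  rw [regNorm, this, LinearMap.det_smul, LinearMap.det_id, mul_one, abs_pow]

/-- **The global degree bound** (regular-representation instance): for a semisimple
`ℚ`-algebra with involution `(E,†)` and a `†`-stable order `R`, there is a constant `c`
such that whenever `q ∈ R` satisfies `a† q a ∈ ℚ^×` for some invertible `a ∈ E`, there
is `b ∈ R` with `b† q b ∈ ℤ \ {0}` and `N(b)² ≤ c·N(q)^{2d-1}`, `d = dim_ℚ E`. -/
theorem arith_bound_global
    (E : Type*) [Ring E] [Algebra ℚ E] [FiniteDimensional ℚ E] [IsSemisimpleRing E]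
    (dag : E → E) (hdag : IsInvolutionQ E dag)
    -- `R` is a `†`-stable order in `E`
    (R : Subalgebra ℤ E)
    (hRfg : (Subalgebra.toSubmodule R).FG)
    (hRspan : Submodule.span ℚ (R : Set E) = ⊤)
    (hRdag : ∀ x ∈ R, dag x ∈ R) :
    ∃ c : ℝ, 0 < c ∧
      ∀ q ∈ R,
        (∃ a : E, IsUnit a ∧ ∃ m : ℚ, m ≠ 0 ∧ dag a * q * a = algebraMap ℚ E m) →
        ∃ b ∈ R, (∃ n : ℤ, n ≠ 0 ∧ dag b * q * b = (n : E)) ∧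
          (regNorm E b : ℝ) ^ 2 ≤
            c * (regNorm E q : ℝ) ^ (2 * Module.finrank ℚ E - 1) := by
  obtain ⟨dag_add, dag_mul, dag_dag, -⟩ := hdag
  obtain ⟨d, hdim⟩ : ∃ d, Module.finrank ℚ E = d := ⟨_, rfl⟩
  rcases Nat.eq_zero_or_pos d with rfl | hd
  · -- In the zero ring every element equals `1`, and all norms are `1`.
    have hsub : Subsingleton E := Module.finrank_zero_iff.1 hdim
    have hone : ∀ x : E, regNorm E x = 1 := by
      intro x
      rw [Subsingleton.elim x (algebraMap ℚ E 1), regNorm_algebraMap, hdim, pow_zero]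
    refine ⟨1, one_pos, fun q _ _ => ⟨0, zero_mem R, ⟨1, one_ne_zero, Subsingleton.elim _ _⟩, ?_⟩⟩
    simp [hone]
  obtain ⟨σ, hσ⟩ : ∃ σ : E →ₗ[ℚ] E, ∀ x, σ x = dag x :=
    ⟨(AddMonoidHom.mk' dag dag_add).toRatLinearMap, fun _ => rfl⟩
  have σ_mul : ∀ x y, σ (x * y) = σ y * σ x := fun x y => by simp only [hσ, dag_mul]
  have σ_σ : ∀ x, σ (σ x) = x := fun x => by simp only [hσ, dag_dag]
  have hRσ : ∀ x ∈ R, σ x ∈ R := fun x hx => hσ x ▸ hRdag x hx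
  have hT := trForm_nondegenerate_of_semisimple E
  have hRlat : IsLat (Subalgebra.toSubmodule R) := ⟨hRfg, hRspan⟩
  obtain ⟨ω, hω⟩ := hRlat.exists_basis hdim
  obtain ⟨c, hc0, hc⟩ := exists_config σ_mul σ_σ hT hRσ ω hω
  obtain ⟨M, hM⟩ := exists_int_value σ_mul σ_σ hT hd ω ((|(c : ℚ)| ^ d : ℚ) : ℝ)
  refine ⟨(((c : ℚ) ^ 2 * max M 1) ^ d : ℚ), ?_, fun q hq ⟨a, ha, m, hm, hqa⟩ => ?_⟩
  · have : (c : ℚ) ≠ 0 := by exact_mod_cast hc0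
    have h1 : 0 < max M 1 := lt_max_of_lt_right one_pos
    exact_mod_cast (by positivity : (0 : ℚ) < ((c : ℚ) ^ 2 * max M 1) ^ d)
  rw [← hσ] at hqa
  obtain ⟨N, m₁, m₂, k, ψ, α, l, hN, hN0, hm₁, hm₂, hNk, hα, hψ, hqψ, hlω, hInt, hdet, hlR⟩ :=
    hc q hq a ha m hm hqa
  obtain ⟨x, hx, ν, hν0, hνM, hxν⟩ := hM ψ α m₂ hα (by exact_mod_cast hm₂) hψ l hlω hInt
    (by exact_mod_cast hdet)
  have hbR := hlR x hx
  have hk0 : k ≠ 0 := by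
    rintro rfl
    exact hN0 (by rw [hNk, mul_zero])
  have hbq : σ ((c * k) • x) * q * ((c * k) • x) = algebraMap ℚ E (c ^ 2 * k * N * ν) := by
    rw [Algebra.algebraMap_eq_smul_one, mul_smul _ ν, ← Algebra.algebraMap_eq_smul_one, ← hxν, hqψ,
      hNk]
    simp only [← Int.cast_smul_eq_zsmul ℚ, map_smul, smul_mul_assoc, mul_smul_comm, smul_smul]
    congr 1
    push_cast
    ring
  obtain ⟨n, hn⟩ := int_of_algebraMap_mem hd ω hω
    (hbq ▸ R.mul_mem (R.mul_mem (hRσ _ hbR) hq) hbR)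
  have hn0 : (n : ℚ) ≠ 0 := by
    rw [← hn]
    have h1 : (c : ℚ) ≠ 0 := by exact_mod_cast hc0
    have h2 : (k : ℚ) ≠ 0 := by exact_mod_cast hk0
    have h3 : (N : ℚ) ≠ 0 := by exact_mod_cast hN0
    positivity
  refine ⟨_, hbR, ⟨n, by exact_mod_cast hn0, ?_⟩, ?_⟩
  · rw [← hσ, hbq, hn, map_intCast]
  generalize (c * k) • x = b at hbq
  have hNq : regNorm E q = |(N : ℚ)| := by rw [regNorm, hN]
  have hNb : regNorm E b ^ 2 * |(N : ℚ)| = |(c : ℚ) ^ 2 * k * N * ν| ^ d := by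
    rw [← hdim, ← regNorm_algebraMap, ← hbq, regNorm_mul, regNorm_mul, hNq]
    have : regNorm E (σ b) = regNorm E b := by
      rw [regNorm, det_involution σ_mul σ_σ hT, regNorm]
    rw [this]
    ring
  have hN1 : (1 : ℚ) ≤ |(N : ℚ)| := by exact_mod_cast Int.one_le_abs hN0
  have hkN : |(k : ℚ)| ≤ |(N : ℚ)| := by
    have h1 : (1 : ℚ) ≤ |(m₁ : ℚ)| := by exact_mod_cast Int.one_le_abs hm₁
    rw [hNk, Int.cast_mul, abs_mul]
    exact le_mul_of_one_le_left (abs_nonneg _) h1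
  have hbound : |(c : ℚ) ^ 2 * k * N * ν| ≤ (c : ℚ) ^ 2 * max M 1 * |(N : ℚ)| ^ 2 := by
    rw [abs_mul, abs_mul, abs_mul, abs_of_nonneg (sq_nonneg (c : ℚ))]
    calc (c : ℚ) ^ 2 * |(k : ℚ)| * |(N : ℚ)| * |ν|
        ≤ (c : ℚ) ^ 2 * |(N : ℚ)| * |(N : ℚ)| * max M 1 := by
          gcongr
          exact hνM.trans (le_max_left _ _)
      _ = _ := by ring
  have hfin : regNorm E b ^ 2 ≤ ((c : ℚ) ^ 2 * max M 1) ^ d * |(N : ℚ)| ^ (2 * d - 1) := by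
    refine le_of_mul_le_mul_right ?_ (one_pos.trans_le hN1)
    rw [hNb, mul_assoc (((c : ℚ) ^ 2 * max M 1) ^ d), ← pow_succ, Nat.sub_add_cancel (by lia), pow_mul, ← mul_pow]
    exact pow_le_pow_left₀ (abs_nonneg _) hbound d
  rw [hNq, hdim]
  exact_mod_cast hfin
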